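/- arXiv:1502.03415 — 3 statements merged into one kernel-verified Lean document; each statement's English description precedes it below -/
import Mathlib

section
/- (Forwarding case.) Consider the feedforward system dy/dt = h(x), dx/dt = f(x) + g(x)u with y ∈ ℝ, x ∈ ℝ^{n_x}, u ∈ ℝ^p, where h, f, g are smooth, h(0) = 0, f(0) = 0. Set H := Dh(0) ∈ ℝ^{1×n_x}, F := Df(0), G := g(0), and let A be the (1+n_x)×(1+n_x) block matrix [[0, H],[0, F]] and B := [0; G]. Assume: for every K_x ∈ ℝ^{p×n_x} and every positive definite P_x ∈ ℝ^{n_x×n_x} with P_x(F + GK_x) + (F + GK_x)ᵀP_x negative definite, there exists a smooth proper positive definite function V_x: ℝ^{n_x} → ℝ≥0 with (1/2)·H(V_x)(0) = P_x and such that for every x ≠ 0, ∇V_x(x)ᵀg(x) = 0 implies ∇V_x(x)·f(x) < 0. Then for every K ∈ ℝ^{p×(1+n_x)} such that A + BK is Hurwitz, there exists a smooth map α₀: ℝ^{1+n_x} → ℝ^p with α₀(0) = 0 and Dα₀(0) = K such that the origin of the closed-loop system (dy/dt, dx/dt) = (h(x), f(x) + g(x)α₀(y,x)) is globally asymptotically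 stable. -/
open Matrix Filter Topology Asymptotics

noncomputable section

/-- `V` is proper: `V χ → ∞` as `‖χ‖ → ∞`. -/
def IsProper {E : Type*} [NormedAddCommGroup E] (V : E → ℝ) : Prop :=
  Filter.Tendsto V (Bornology.cobounded E) Filter.atTop

/-- `V` is positive definite: `V 0 = 0` and `V x > 0` for `x ≠ 0`. -/
def IsPosDefFn {E : Type*} [NormedAddCommGroup E] (V : E → ℝ) : Prop :=
  V 0 = 0 ∧ ∀ x : E, x ≠ 0 → 0 < V x

/-- The Hessian matrix of `V` at `x`. -/
def hessianAt {n : ℕ} (V : (Fin n → ℝ) → ℝ) (x : Fin n → ℝ) :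
    Matrix (Fin n) (Fin n) ℝ :=
  Matrix.of fun i j => iteratedFDeriv ℝ 2 V x ![Pi.single i 1, Pi.single j 1]

/-- A real square matrix is Hurwitz if all of its (complex) eigenvalues have
negative real part. -/
def Hurwitz {ι : Type*} [Fintype ι] [DecidableEq ι] (M : Matrix ι ι ℝ) : Prop :=
  ∀ μ : ℂ, μ ∈ spectrum ℂ (M.map (algebraMap ℝ ℂ)) → μ.re < 0

/-- Global asymptotic stability of the origin for `χ' = F (χ)`:
(i) Lyapunov stability of the origin, and (ii) for every initial condition there is a
solution defined on all of `[0, ∞)` converging to the origin (for a locally Lipschitz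
vector field, by uniqueness of solutions, this is equivalent to requiring every maximal
solution to be defined on `[0,∞)` and to converge to the origin). -/
def IsGAS {E : Type*} [NormedAddCommGroup E] [NormedSpace ℝ E] (F : E → E) : Prop :=
  (∀ ε > 0, ∃ δ > 0, ∀ (χ : ℝ → E) (T : ℝ),
      (∀ t ∈ Set.Ico (0:ℝ) T, HasDerivAt χ (F (χ t)) t) →
      ‖χ 0‖ ≤ δ → ∀ t ∈ Set.Ico (0:ℝ) T, ‖χ t‖ ≤ ε) ∧
  (∀ x₀ : E, ∃ χ : ℝ → E, χ 0 = x₀ ∧ (∀ t : ℝ, 0 ≤ t → HasDerivAt χ (F (χ t)) t) ∧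
      Filter.Tendsto χ Filter.atTop (nhds 0))


theorem aux_sublevel {E : Type*} [NormedAddCommGroup E] [ProperSpace E] (V : E → ℝ)
    (hc : Continuous V) (hp : IsProper V) (hpd : IsPosDefFn V) (ε : ℝ) (hε : 0 < ε) :
    ∃ v0 > 0, ∀ x, V x < v0 → ‖x‖ < ε := by
  obtain ⟨r, hr⟩ : ∃ r : ℝ, ∀ x, V x < 1 → ‖x‖ ≤ r := by
    have h1 := hp.eventually (eventually_ge_atTop (1:ℝ))
    rw [(Metric.hasBasis_cobounded_compl_closedBall (0:E)).eventually_iff] at h1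
    obtain ⟨r, -, hr⟩ := h1
    refine ⟨r, fun x hx => ?_⟩
    by_contra hcon
    have := hr (x := x) (by simpa using hcon)
    linarith
  have hK : IsCompact (Metric.closedBall (0:E) r ∩ {x | ε ≤ ‖x‖}) :=
    (isCompact_closedBall _ _).inter_right (isClosed_le continuous_const continuous_norm)
  rcases (Metric.closedBall (0:E) r ∩ {x | ε ≤ ‖x‖}).eq_empty_or_nonempty with he | hne
  · refine ⟨1, one_pos, fun x hx => ?_⟩
    by_contra hcon
    have : x ∈ (Metric.closedBall (0:E) r ∩ {x | ε ≤ ‖x‖}) :=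
      ⟨by simpa using hr x hx, by simpa using hcon⟩
    rw [he] at this
    exact this
  · obtain ⟨x0, hx0, hmin⟩ := hK.exists_isMinOn hne hc.continuousOn
    have hx0n : x0 ≠ 0 := by
      rintro rfl
      have := hx0.2
      simp at this
      linarith
    refine ⟨min 1 (V x0), lt_min one_pos (hpd.2 x0 hx0n), fun x hx => ?_⟩
    by_contra hcon
    have hx1 : V x < 1 := lt_of_lt_of_le hx (min_le_left _ _)
    have hx2 : V x < V x0 := lt_of_lt_of_le hx (min_le_right _ _)
    have : x ∈ (Metric.closedBall (0:E) r ∩ {x | ε ≤ ‖x‖}) :=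
      ⟨by simpa using hr x hx1, by simpa using hcon⟩
    have := hmin this
    simp at this
    linarith

theorem aux_bddsub {E : Type*} [NormedAddCommGroup E] (V : E → ℝ)
    (hp : IsProper V) (c : ℝ) : ∃ r : ℝ, ∀ x, V x ≤ c → ‖x‖ ≤ r := by
  have h1 := hp.eventually (eventually_gt_atTop c)
  rw [(Metric.hasBasis_cobounded_compl_closedBall (0:E)).eventually_iff] at h1
  obtain ⟨r, -, hr⟩ := h1
  refine ⟨r, fun x hx => ?_⟩
  by_contra hcon
  have := hr (x := x) (by simpa using hcon)
  linarith

theorem aux_global {E : Type*} [NormedAddCommGroup E] [NormedSpace ℝ E] [CompleteSpace E]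
    (X : E → E) (K : NNReal) (hL : LipschitzWith K X) (C : ℝ) (hC : ∀ x, ‖X x‖ ≤ C) (x₀ : E) :
    ∃ χ : ℝ → E, χ 0 = x₀ ∧ ∀ t, HasDerivAt χ (X (χ t)) t := by
  have hC0 : 0 ≤ C := le_trans (norm_nonneg _) (hC 0)
  have hloc : ∀ T : ℝ, 0 < T → ∃ χ : ℝ → E, χ 0 = x₀ ∧
      ∀ t ∈ Set.Ioo (-T) T, HasDerivAt χ (X (χ t)) t := by
    intro T hT
    have hpl : IsPicardLindelof (fun _ : ℝ => X) (tmin := -T) (tmax := T)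
        ⟨0, by constructor <;> linarith⟩ x₀ (⟨C * T, by positivity⟩ : NNReal) 0
        ⟨C, hC0⟩ K := by
      refine ⟨fun t _ => hL.lipschitzOnWith, fun x _ => continuousOn_const, fun t _ x _ => hC x, ?_⟩
      simp
      rfl
    obtain ⟨χ, h0, h1⟩ := hpl.exists_eq_forall_mem_Icc_hasDerivWithinAt₀
    refine ⟨χ, h0, fun t ht => (h1 t ⟨ht.1.le, ht.2.le⟩).hasDerivAt (Icc_mem_nhds ht.1 ht.2)⟩
  choose! χ h0 h1 using hloc
  have huniq : ∀ T S : ℝ, 0 < T → T ≤ S → Set.EqOn (χ T) (χ S) (Set.Ioo (-T) T) := by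
    intro T S hT hTS
    refine ODE_solution_unique_of_mem_Ioo (v := fun _ => X) (s := fun _ => Set.univ) (K := K)
      (t₀ := 0) (fun t _ => hL.lipschitzOnWith) (by constructor <;> linarith)
      (fun t ht => ⟨h1 T hT t ht, trivial⟩)
      (fun t ht => ⟨h1 S (by linarith) t ⟨by linarith [ht.1], by linarith [ht.2]⟩, trivial⟩) ?_
    rw [h0 T hT, h0 S (by linarith)]
  refine ⟨fun t => χ (|t| + 1) t, ?_, fun t => ?_⟩
  · exact h0 _ (by positivity)
  · have hT : 0 < |t| + 2 := by positivity
    have hd := h1 (|t| + 2) hT t ⟨by linarith [neg_abs_le t], by linarith [le_abs_self t]⟩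
    have hev : (fun s => χ (|s| + 1) s) =ᶠ[𝓝 t] χ (|t| + 2) := by
      have : ∀ᶠ s in 𝓝 t, |s| < |t| + 1 :=
        (continuous_abs.tendsto t).eventually (gt_mem_nhds (by linarith))
      filter_upwards [this] with s hs
      refine huniq (|s|+1) (|t|+2) (by positivity) (by linarith) ?_
      exact ⟨by linarith [neg_abs_le s], by linarith [le_abs_self s]⟩
    have h3 := hd.congr_of_eventuallyEq hev
    have h4 : χ (|t| + 1) t = χ (|t| + 2) t := hev.eq_of_nhds
    simpa [h4] using h3

theorem aux_antitone {E : Type*} [NormedAddCommGroup E] [NormedSpace ℝ E] 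
    (V : E → ℝ) (hV : ContDiff ℝ (⊤ : ℕ∞) V) (X : E → E)
    (hle : ∀ z, fderiv ℝ V z (X z) ≤ 0) (χ : ℝ → E) (s : Set ℝ) (hs : Convex ℝ s)
    (h : ∀ t ∈ s, HasDerivAt χ (X (χ t)) t) : AntitoneOn (fun t => V (χ t)) s := by
  have hd : ∀ t ∈ s, HasDerivAt (fun t => V (χ t)) (fderiv ℝ V (χ t) (X (χ t))) t := by
    intro t ht
    exact ((hV.differentiable (by simp)) (χ t)).hasFDerivAt.comp_hasDerivAt t (h t ht)
  refine antitoneOn_of_deriv_nonpos hs (fun t ht => (hd t ht).continuousAt.continuousWithinAt)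
    (fun t ht => (hd t (interior_subset ht)).differentiableAt.differentiableWithinAt) ?_
  intro t ht
  rw [(hd t (interior_subset ht)).deriv]
  exact hle _

theorem aux_gas {E : Type*} [NormedAddCommGroup E] [NormedSpace ℝ E] [FiniteDimensional ℝ E]
    (V : E → ℝ) (hV : ContDiff ℝ (⊤ : ℕ∞) V) (hp : IsProper V) (hpd : IsPosDefFn V)
    (X : E → E) (hX : ContDiff ℝ (⊤ : ℕ∞) X) (hX0 : X 0 = 0)
    (hneg : ∀ z, z ≠ 0 → fderiv ℝ V z (X z) < 0) : IsGAS X := by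
  have : ProperSpace E := FiniteDimensional.proper ℝ E
  have hle : ∀ z, fderiv ℝ V z (X z) ≤ 0 := by
    intro z
    by_cases hz : z = 0
    · subst hz; simp [hX0]
    · exact (hneg z hz).le
  have hVnn : ∀ z, 0 ≤ V z := by
    intro z
    by_cases hz : z = 0
    · subst hz; simp [hpd.1]
    · exact (hpd.2 z hz).le
  refine ⟨?_, ?_⟩
  · intro ε hε
    obtain ⟨v0, hv0, hsub⟩ := aux_sublevel V hV.continuous hp hpd ε hε
    have : ∀ᶠ x in 𝓝 (0:E), V x < v0 :=
      (hV.continuous.tendsto 0).eventually (gt_mem_nhds (by simpa [hpd.1] using hv0))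
    obtain ⟨δ, hδ, hball⟩ := Metric.nhds_basis_closedBall.eventually_iff.1 this
    refine ⟨δ, hδ, fun χ T hχ h0 t ht => (hsub _ ?_).le⟩
    have ha := aux_antitone V hV X hle χ _ (convex_Ico 0 T) hχ
    have h1 := ha (a := 0) ⟨le_rfl, by linarith [ht.1, ht.2]⟩ ht ht.1
    exact lt_of_le_of_lt h1 (hball (by simpa using h0))
  · intro x₀
    obtain ⟨r, hr⟩ := aux_bddsub V hp (V x₀)
    have hr0 : 0 ≤ r := le_trans (norm_nonneg _) (hr x₀ le_rfl)
    let φ : ContDiffBump (0:E) := ⟨r + 1, r + 2, by linarith, by linarith⟩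
    let Y : E → E := fun z => φ z • X z
    have hYc : ContDiff ℝ (⊤ : ℕ∞) Y := φ.contDiff.smul hX
    have hYs : HasCompactSupport Y := φ.hasCompactSupport.smul_right
    obtain ⟨K, hK⟩ := hYc.lipschitzWith_of_hasCompactSupport hYs (by simp)
    obtain ⟨C, hC⟩ := hYs.exists_bound_of_continuous hYc.continuous
    obtain ⟨χ, h0, h1⟩ := aux_global Y K hK C hC x₀
    have hYle : ∀ z, fderiv ℝ V z (Y z) ≤ 0 := by
      intro z
      simp only [Y, map_smul, smul_eq_mul]
      exact mul_nonpos_of_nonneg_of_nonpos φ.nonneg (hle z)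
    have ha := aux_antitone V hV Y hYle χ _ (convex_Ici 0) (fun t _ => h1 t)
    have hYX : ∀ t, 0 ≤ t → Y (χ t) = X (χ t) := by
      intro t ht
      have h2 := ha (a := 0) (b := t) (by simp) (by simpa using ht) ht
      simp only [h0] at h2
      have : φ (χ t) = 1 := φ.one_of_mem_closedBall (by
        simp only [φ, Metric.mem_closedBall, dist_zero_right]
        linarith [hr _ h2])
      simp [Y, this]
    have h1' : ∀ t, 0 ≤ t → HasDerivAt χ (X (χ t)) t := fun t ht => hYX t ht ▸ h1 t
    refine ⟨χ, h0, h1', ?_⟩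
    have key : ∀ c > 0, ∃ t0 ≥ 0, V (χ t0) < c := by
      intro c hc
      by_contra hcon
      push Not at hcon
      have hcomp : IsCompact (Metric.closedBall (0:E) r ∩ {z | c ≤ V z}) :=
        (isCompact_closedBall _ _).inter_right (isClosed_le continuous_const hV.continuous)
      have hin : ∀ t, 0 ≤ t → χ t ∈ (Metric.closedBall (0:E) r ∩ {z | c ≤ V z}) := by
        intro t ht
        refine ⟨?_, hcon t ht⟩
        have h2 := ha (a := 0) (b := t) (by simp) (by simpa using ht) ht
        simp only [h0] at h2
        simpa using hr _ h2
      have hcont : Continuous (fun z => fderiv ℝ V z (X z)) :=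
        (hV.continuous_fderiv (by simp)).clm_apply hX.continuous
      obtain ⟨z0, hz0, hmax⟩ := hcomp.exists_isMaxOn ⟨_, hin 0 le_rfl⟩ hcont.continuousOn
      have hz0n : z0 ≠ 0 := by
        rintro rfl
        have := hz0.2
        simp [hpd.1] at this
        linarith
      set m := - fderiv ℝ V z0 (X z0) with hm
      have hmpos : 0 < m := by have := hneg z0 hz0n; linarith
      have hd : ∀ t ∈ Set.Ici (0:ℝ), HasDerivAt (fun t => V (χ t) + m * t)
          (fderiv ℝ V (χ t) (X (χ t)) + m) t := by
        intro t ht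
        have a1 := ((hV.differentiable (by simp)) (χ t)).hasFDerivAt.comp_hasDerivAt t (h1' t ht)
        have a2 := (hasDerivAt_id t).const_mul m
        simpa using! a1.add a2
      have hanti : AntitoneOn (fun t => V (χ t) + m * t) (Set.Ici 0) := by
        refine antitoneOn_of_deriv_nonpos (convex_Ici 0)
          (fun t ht => (hd t ht).continuousAt.continuousWithinAt)
          (fun t ht => (hd t (interior_subset ht)).differentiableAt.differentiableWithinAt) ?_
        intro t ht
        rw [(hd t (interior_subset ht)).deriv]
        have := hmax (hin t (interior_subset ht))
        simp only [Set.mem_ofPred_eq] at this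
        linarith
      have hT0 : 0 ≤ (V x₀ + 1) / m := div_nonneg (by linarith [hVnn x₀]) hmpos.le
      have h5 := hanti (a := 0) (b := (V x₀ + 1) / m) (by simp) (by simpa using hT0) hT0
      simp only [h0, mul_zero, add_zero] at h5
      rw [mul_div_cancel₀ _ hmpos.ne'] at h5
      linarith [hVnn (χ ((V x₀ + 1) / m))]
    rw [Metric.tendsto_atTop]
    intro ε hε
    obtain ⟨v0, hv0, hsub⟩ := aux_sublevel V hV.continuous hp hpd ε hε
    obtain ⟨t0, ht0, hvt⟩ := key v0 hv0
    refine ⟨t0, fun t ht => ?_⟩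
    rw [dist_zero_right]
    exact hsub _ (lt_of_le_of_lt (ha (a := t0) (b := t) ht0 (le_trans ht0 ht) ht) hvt)

theorem aux_select {E G : Type*} [NormedAddCommGroup E] [NormedSpace ℝ E] [FiniteDimensional ℝ E]
    [NormedAddCommGroup G] [NormedSpace ℝ G]
    (t : E → Set G) (ht : ∀ x, Convex ℝ (t x))
    (hloc : ∀ x, ∃ U ∈ 𝓝 x, ∃ s : E → G, ContDiff ℝ (⊤ : ℕ∞) s ∧ ∀ y ∈ U, s y ∈ t y) :
    ∃ α : E → G, ContDiff ℝ (⊤ : ℕ∞) α ∧ ∀ x, α x ∈ t x := by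
  have : ProperSpace E := FiniteDimensional.proper ℝ E
  obtain ⟨a, ha⟩ := exists_contMDiffMap_forall_mem_convex_of_local (n := (⊤ : ℕ∞))
    (modelWithCornersSelf ℝ E) (t := t) ht (fun x => by
      obtain ⟨U, hU, s, hs, hst⟩ := hloc x
      exact ⟨U, hU, s, hs.contMDiff.contMDiffOn, hst⟩)
  exact ⟨a, a.contMDiff.contDiff, ha⟩

theorem aux_feedback {E : Type*} [NormedAddCommGroup E] [NormedSpace ℝ E] [FiniteDimensional ℝ E]
    {p : ℕ} (a : E → ℝ) (b : E → Fin p → ℝ) (ha : Continuous a) (hb : Continuous b)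
    (k : E →L[ℝ] (Fin p → ℝ))
    (hclf : ∀ z, z ≠ 0 → b z = 0 → a z < 0)
    (hk : ∀ᶠ z in 𝓝[≠] 0, a z + b z ⬝ᵥ k z < 0) :
    ∃ α : E → Fin p → ℝ, ContDiff ℝ (⊤ : ℕ∞) α ∧ α =ᶠ[𝓝 0] k ∧
      ∀ z, z ≠ 0 → a z + b z ⬝ᵥ α z < 0 := by
  rw [eventually_nhdsWithin_iff, Metric.eventually_nhds_iff] at hk
  obtain ⟨r, hr, hk⟩ := hk
  let t : E → Set (Fin p → ℝ) := fun z =>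
    {u | (z ≠ 0 → a z + b z ⬝ᵥ u < 0) ∧ (‖z‖ ≤ r / 2 → u = k z)}
  obtain ⟨α, h1, h2⟩ := aux_select t (fun z => by
      intro u hu v hv c d hc hd hcd
      refine ⟨fun hz => ?_, fun hz => ?_⟩
      · have h1 := hu.1 hz
        have h2 := hv.1 hz
        rw [dotProduct_add, dotProduct_smul, dotProduct_smul, smul_eq_mul, smul_eq_mul]
        have : a z = c * a z + d * a z := by rw [← add_mul, hcd, one_mul]
        rw [this]
        rcases eq_or_lt_of_le hc with h | h
        · subst h
          simp at hcd; subst hcd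
          linarith
        · nlinarith
      · rw [hu.2 hz, hv.2 hz, ← add_smul, hcd, one_smul]) (fun z => by
      by_cases hz : ‖z‖ < r
      · refine ⟨Metric.ball 0 r, Metric.isOpen_ball.mem_nhds (by simpa using hz), k,
          k.contDiff, fun y hy => ⟨fun hy0 => hk (by simpa using hy) hy0, fun _ => rfl⟩⟩
      · have hz0 : z ≠ 0 := by rintro rfl; simp at hz; linarith
        obtain ⟨u, hu⟩ : ∃ u : Fin p → ℝ, a z + b z ⬝ᵥ u < 0 := by
          by_cases hbz : b z = 0
          · exact ⟨0, by simpa using hclf z hz0 hbz⟩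
          · have hpos : 0 < b z ⬝ᵥ b z := by
              rcases (dotProduct_self_star_nonneg (b z)).lt_or_eq with h | h
              · simpa using h
              · exact absurd (by simpa using h.symm) hbz
            refine ⟨(-(a z + 1) / (b z ⬝ᵥ b z)) • b z, ?_⟩
            rw [dotProduct_smul, smul_eq_mul, div_mul_cancel₀ _ hpos.ne']
            linarith
        have hcont : Continuous (fun y => a y + b y ⬝ᵥ u) := by
          unfold dotProduct; fun_prop
        have e1 : ∀ᶠ y in 𝓝 z, a y + b y ⬝ᵥ u < 0 :=
          (hcont.tendsto z).eventually (gt_mem_nhds hu)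
        have e2 : ∀ᶠ y in 𝓝 z, r / 2 < ‖y‖ :=
          (continuous_norm.tendsto z).eventually (lt_mem_nhds (by linarith))
        refine ⟨_, e1.and e2, fun _ => u, contDiff_const, fun y hy => ⟨fun _ => hy.1, fun h => ?_⟩⟩
        linarith [hy.2])
  refine ⟨α, h1, ?_, fun z hz => (h2 z).1 hz⟩
  filter_upwards [Metric.closedBall_mem_nhds (0:E) (half_pos hr)] with z hz
  exact (h2 z).2 (by simpa using hz)

theorem aux_kappa {E : Type*} [NormedAddCommGroup E] [ProperSpace E]
    {p : ℕ} (W : E → ℝ) (hW : Continuous W) (hp : IsProper W) (hpd : IsPosDefFn W)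
    (a0 a1 : E → ℝ) (b0 b1 : E → Fin p → ℝ) (ha0 : Continuous a0) (ha1 : Continuous a1)
    (hb0 : Continuous b0) (hb1 : Continuous b1)
    (hclf : ∀ x, x ≠ 0 → b0 x = 0 → a0 x < 0)
    (R : ℝ) (hR : 0 < R)
    (hloc : ∀ (q : ℝ) (x : E), |q| ≤ R → ‖x‖ ≤ R → (q ≠ 0 ∨ x ≠ 0) → b0 x + q • b1 x = 0 →
      a0 x + q * a1 x < 0) :
    ∃ κ : ℝ → ℝ, ContDiff ℝ (⊤ : ℕ∞) κ ∧ (∀ v, 1 ≤ κ v) ∧ κ 0 = 1 ∧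
      ∀ (q : ℝ) (x : E), |q| ≤ R → (q ≠ 0 ∨ x ≠ 0) → κ (W x) • b0 x + q • b1 x = 0 →
        κ (W x) * a0 x + q * a1 x < 0 := by
  have hWnn : ∀ z, 0 ≤ W z := by
    intro z
    by_cases hz : z = 0
    · subst hz; simp [hpd.1]
    · exact (hpd.2 z hz).le
  let t : ℝ → Set ℝ := fun v => {k | 1 ≤ k ∧ (v = 0 → k = 1) ∧
    ∀ (q : ℝ) (x : E), W x = v → |q| * k ≤ R → (q ≠ 0 ∨ x ≠ 0) → b0 x + q • b1 x = 0 →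
      a0 x + q * a1 x < 0}
  obtain ⟨κ, h1, h2⟩ := aux_select t (fun v => by
      refine Set.OrdConnected.convex ⟨?_⟩
      intro k hk l hl m hm
      refine ⟨hk.1.trans hm.1, fun h => le_antisymm (hm.2.trans (hl.2.1 h).le) (hk.1.trans hm.1),
        fun q x hx hq => hk.2.2 q x hx ?_⟩
      exact le_trans (mul_le_mul_of_nonneg_left hm.1 (abs_nonneg q)) hq) (fun v => by
      rcases lt_trichotomy v 0 with hv | hv | hv
      · refine ⟨Set.Iio 0, Iio_mem_nhds hv, fun _ => 1, contDiff_const, fun w hw =>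
          ⟨le_rfl, fun _ => rfl, fun q x hx => ?_⟩⟩
        have := hWnn x
        simp at hw
        linarith
      · subst hv
        obtain ⟨v0, hv0, hsub⟩ := aux_sublevel W hW hp hpd R hR
        refine ⟨Set.Iio v0, Iio_mem_nhds hv0, fun _ => 1, contDiff_const, fun w hw =>
          ⟨le_rfl, fun _ => rfl, fun q x hx hq => hloc q x (by simpa using hq) (hsub x ?_).le⟩⟩
        rw [hx]; exact hw
      · obtain ⟨r, hr⟩ := aux_bddsub W hp (2 * v)
        let S : Set (ℝ × E) := (Metric.closedBall 0 R ×ˢ Metric.closedBall 0 r) ∩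
          {z | v / 2 ≤ W z.2 ∧ b0 z.2 + z.1 • b1 z.2 = 0 ∧ 0 ≤ a0 z.2 + z.1 * a1 z.2}
        have hS : IsCompact S := by
          refine ((isCompact_closedBall _ _).prod (isCompact_closedBall _ _)).inter_right ?_
          have c1 : IsClosed {z : ℝ × E | v / 2 ≤ W z.2} :=
            isClosed_le continuous_const (by fun_prop)
          have c2 : IsClosed {z : ℝ × E | b0 z.2 + z.1 • b1 z.2 = 0} :=
            isClosed_eq (by fun_prop) continuous_const
          have c3 : IsClosed {z : ℝ × E | 0 ≤ a0 z.2 + z.1 * a1 z.2} :=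
            isClosed_le continuous_const (by fun_prop)
          exact c1.inter (c2.inter c3)
        obtain ⟨m, hm, hmS⟩ : ∃ m > 0, ∀ z ∈ S, m ≤ |z.1| := by
          rcases S.eq_empty_or_nonempty with he | hne
          · exact ⟨1, one_pos, fun z hz => by rw [he] at hz; exact absurd hz (Set.notMem_empty z)⟩
          · obtain ⟨z0, hz0, hmin⟩ := hS.exists_isMinOn hne
              (f := fun z => |z.1|) (by fun_prop)
            refine ⟨|z0.1|, abs_pos.2 ?_, fun z hz => hmin hz⟩
            intro h0
            obtain ⟨-, c1, c2, c3⟩ := hz0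
            have hx0 : z0.2 ≠ 0 := by
              intro hx; rw [hx, hpd.1] at c1; linarith
            have := hclf z0.2 hx0 (by simpa [h0] using c2)
            simp [h0] at c3
            linarith
        refine ⟨Set.Ioo (v/2) (2*v), Ioo_mem_nhds (by linarith) (by linarith),
          fun _ => 1 + R / (m / 2), contDiff_const, fun w hw => ⟨?_, fun h => ?_, ?_⟩⟩
        · have : 0 < R / (m/2) := by positivity
          linarith
        · subst h; linarith [hw.1]
        · intro q x hx hq hne hb
          by_contra hcon
          have hpos : 0 < R / (m/2) := by positivity
          have hq1 : |q| ≤ R := by nlinarith [abs_nonneg q]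
          have hmem : ((q, x) : ℝ × E) ∈ S := by
            refine ⟨⟨by simpa using hq1, by simpa using hr x (by rw [hx]; exact hw.2.le)⟩,
              by simpa [hx] using hw.1.le, hb, by simpa using hcon⟩
          have hqm := hmS _ hmem
          simp only at hqm
          have e1 : m * (1 + R / (m/2)) ≤ R :=
            le_trans (mul_le_mul_of_nonneg_right hqm (by linarith)) hq
          have e2 : m * (R / (m/2)) = 2 * R := by field_simp
          nlinarith)
  refine ⟨κ, h1, fun v => (h2 v).1, (h2 0).2.1 rfl, ?_⟩
  intro q x hq hne hb
  have hk1 := (h2 (W x)).1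
  set k := κ (W x)
  have hk : 0 < k := by linarith
  have h3 := (h2 (W x)).2.2 (q / k) x rfl
    (by rw [abs_div, abs_of_pos hk, div_mul_cancel₀ _ hk.ne']; exact hq)
    (by rcases hne with h | h
        · exact Or.inl (div_ne_zero h hk.ne')
        · exact Or.inr h) (by
      have : b0 x + (q / k) • b1 x = k⁻¹ • (k • b0 x + q • b1 x) := by
        rw [smul_add, smul_smul, smul_smul, inv_mul_cancel₀ hk.ne', one_smul]
        congr 2; field_simp
      rw [this, hb, smul_zero])
  have h4 : k * a0 x + q * a1 x = k * (a0 x + q / k * a1 x) := by field_simp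
  rw [h4]
  exact mul_neg_of_pos_of_neg hk h3

theorem aux_local {E : Type*} [NormedAddCommGroup E] [NormedSpace ℝ E] [FiniteDimensional ℝ E]
    (Φ : E → E →L[ℝ] ℝ) (X : E → E) (Φ' : E →L[ℝ] E →L[ℝ] ℝ) (X' : E →L[ℝ] E)
    (hΦ : HasFDerivAt Φ Φ' 0) (hX : HasFDerivAt X X' 0) (hΦ0 : Φ 0 = 0) (hX0 : X 0 = 0)
    (hneg : ∀ v, v ≠ 0 → Φ' v (X' v) < 0) : ∀ᶠ z in 𝓝[≠] (0:E), Φ z (X z) < 0 := by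
  have : ProperSpace E := FiniteDimensional.proper ℝ E
  obtain ⟨m, hm, hmS⟩ : ∃ m > 0, ∀ v, Φ' v (X' v) ≤ - m * ‖v‖^2 := by
    rcases (Metric.sphere (0:E) 1).eq_empty_or_nonempty with he | hne
    · refine ⟨1, one_pos, fun v => ?_⟩
      by_cases hv : v = 0
      · simp [hv]
      · exfalso
        have : ‖v‖⁻¹ • v ∈ Metric.sphere (0:E) 1 := by simp [norm_smul, hv]
        rw [he] at this; exact this
    · obtain ⟨v0, hv0, hmax⟩ := (isCompact_sphere (0:E) 1).exists_isMaxOn hne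
        (f := fun v => Φ' v (X' v)) (by fun_prop)
      have hv0n : v0 ≠ 0 := by rintro rfl; simp at hv0
      refine ⟨-Φ' v0 (X' v0), by linarith [hneg v0 hv0n], fun v => ?_⟩
      by_cases hv : v = 0
      · simp [hv]
      · have h1 : ‖v‖⁻¹ • v ∈ Metric.sphere (0:E) 1 := by simp [norm_smul, hv]
        have h2 := hmax h1
        simp only [Set.mem_ofPred_eq, map_smul, _root_.smul_apply, smul_eq_mul] at h2
        have hn : 0 < ‖v‖ := norm_pos_iff.2 hv
        have h3 := mul_le_mul_of_nonneg_right h2 (sq_nonneg ‖v‖)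
        have h4 : ‖v‖⁻¹ * (‖v‖⁻¹ * (Φ' v) (X' v)) * ‖v‖^2 = Φ' v (X' v) := by field_simp
        rw [h4] at h3
        linarith
  have hd : (fun z => Φ z (X z) - Φ' z (X' z)) =o[𝓝 0] fun z => ‖z‖^2 := by
    have e1 : (fun z => Φ z - Φ' z) =o[𝓝 0] fun z => z := by
      have := hΦ.isLittleO; simpa [hΦ0] using this
    have e2 : (fun z => X z - X' z) =o[𝓝 0] fun z => z := by
      have := hX.isLittleO; simpa [hX0] using this
    have e3 : X =O[𝓝 0] fun z : E => z := by
      have := hX.isBigO_sub; simpa [hX0] using this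
    have e4 : (fun z => Φ' z) =O[𝓝 0] fun z : E => z := Φ'.isBigO_id _
    have f1 : (fun z => (Φ z - Φ' z) (X z)) =o[𝓝 0] fun z => ‖z‖ * ‖z‖ := by
      refine IsBigO.trans_isLittleO (g := fun z => ‖Φ z - Φ' z‖ * ‖X z‖) ?_
        (e1.norm_norm.mul_isBigO e3.norm_norm)
      exact IsBigO.of_bound 1 (Eventually.of_forall fun z => by
        simpa using (Φ z - Φ' z).le_opNorm (X z))
    have f2 : (fun z => Φ' z (X z - X' z)) =o[𝓝 0] fun z => ‖z‖ * ‖z‖ := by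
      refine IsBigO.trans_isLittleO (g := fun z => ‖Φ' z‖ * ‖X z - X' z‖) ?_
        (e4.norm_norm.mul_isLittleO e2.norm_norm)
      exact IsBigO.of_bound 1 (Eventually.of_forall fun z => by
        simpa using (Φ' z).le_opNorm (X z - X' z))
    refine (f1.add f2).congr (fun z => ?_) (fun z => by ring)
    simp
  have hb := hd.bound (half_pos hm)
  rw [eventually_nhdsWithin_iff]
  filter_upwards [hb] with z hz hz0
  have hn : 0 < ‖z‖ := norm_pos_iff.2 hz0
  have h1 := hmS z
  have h2 := (abs_le.1 (by simpa using hz : |Φ z (X z) - Φ' z (X' z)| ≤ m / 2 * ‖z‖^2)).2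
  nlinarith [mul_pos hm (pow_pos hn 2)]

section lyap
open scoped Matrix.Norms.L2Operator

theorem aux_pow {ι : Type*} [Fintype ι] [DecidableEq ι] [Nonempty ι] (C : Matrix ι ι ℂ)
    (hC : ∀ μ ∈ spectrum ℂ C, ‖μ‖ < 1) : ∃ m : ℕ, 1 ≤ m ∧ ‖C ^ m‖ < 1 := by
  have h1 : spectralRadius ℂ C < 1 := by
    have := spectrum.spectralRadius_lt_of_forall_lt C (r := 1) (fun k hk => by
      have := hC k hk
      exact_mod_cast this)
    simpa using this
  have h2 := (spectrum.pow_nnnorm_pow_one_div_tendsto_nhds_spectralRadius C).eventually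
    (gt_mem_nhds h1)
  obtain ⟨m, hm, hm1⟩ := (h2.and (eventually_ge_atTop 1)).exists
  refine ⟨m, hm1, ?_⟩
  by_contra hcon
  push Not at hcon
  have h3 : (1 : ENNReal) ≤ (‖C ^ m‖₊ : ENNReal) := by
    have : (1 : NNReal) ≤ ‖C ^ m‖₊ := by exact_mod_cast hcon
    exact_mod_cast this
  have h4 := ENNReal.one_le_rpow h3 (show (0:ℝ) < 1 / m by positivity)
  exact absurd hm (not_lt.2 h4)

theorem aux_eps {ι : Type*} [Fintype ι] [DecidableEq ι] [Nonempty ι] (N : Matrix ι ι ℂ)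
    (hN : ∀ μ ∈ spectrum ℂ N, μ.re < 0) :
    ∃ ε : ℝ, 0 < ε ∧ ∀ μ ∈ spectrum ℂ (1 + (ε : ℂ) • N), ‖μ‖ < 1 := by
  obtain ⟨μ0, hμ0, hmax⟩ := (spectrum.isCompact (𝕜 := ℂ) N).exists_isMaxOn (spectrum.nonempty N)
    (f := fun μ : ℂ => μ.re) Complex.continuous_re.continuousOn
  set δ := -μ0.re with hδ
  have hδ0 : 0 < δ := by have := hN μ0 hμ0; linarith
  obtain ⟨B, hB⟩ := (spectrum.isCompact (𝕜 := ℂ) N).isBounded.exists_norm_le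
  have hε : 0 < δ / (B^2 + 1) := by positivity
  refine ⟨δ / (B^2+1), hε, fun μ hμ => ?_⟩
  set ε := δ / (B^2+1) with hεd
  have hεB : ε * (B^2 + 1) = δ := by rw [hεd]; field_simp
  have hεc : (ε : ℂ) ≠ 0 := by exact_mod_cast hε.ne'
  have h1 : (1 : Matrix ι ι ℂ) = algebraMap ℂ (Matrix ι ι ℂ) 1 := by simp
  rw [h1, ← spectrum.singleton_add_eq, spectrum.smul_eq_smul _ _ (spectrum.nonempty N)] at hμ
  obtain ⟨ν, hν, rfl⟩ : ∃ ν ∈ spectrum ℂ N, 1 + ε * ν = μ := by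
    obtain ⟨x, hx, y, hy, hxy⟩ := hμ
    obtain ⟨ν, hν, hνy⟩ := hy
    refine ⟨ν, hν, ?_⟩
    rw [Set.mem_singleton_iff] at hx
    rw [← hxy, ← hνy, hx]
    simp
  have hre : ν.re ≤ -δ := by have := hmax hν; simpa [hδ] using this
  have hnn := hB ν hν
  have hsq : ‖(1 + ε * ν : ℂ)‖^2 = 1 + 2 * ε * ν.re + ε^2 * ‖ν‖^2 := by
    rw [← Complex.normSq_eq_norm_sq, ← Complex.normSq_eq_norm_sq, Complex.normSq_apply,
      Complex.normSq_apply]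
    simp
    ring
  have h5 : ‖ν‖^2 ≤ B^2 := pow_le_pow_left₀ (norm_nonneg _) hnn 2
  have h6 : ‖(1 + ε * ν : ℂ)‖^2 < 1 := by
    rw [hsq]
    have e1 : ε * (ε * ‖ν‖^2) ≤ ε * δ := by
      apply mul_le_mul_of_nonneg_left _ hε.le
      nlinarith
    nlinarith
  nlinarith [norm_nonneg (1 + ε * ν : ℂ)]

theorem aux_lyap {ι : Type*} [Fintype ι] [DecidableEq ι] [Nonempty ι] (N : Matrix ι ι ℝ)
    (hN : Hurwitz N) : ∃ P : Matrix ι ι ℝ, Pᵀ = P ∧ (∀ v, v ≠ 0 → 0 < v ⬝ᵥ (P *ᵥ v)) ∧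
      ∀ v, v ≠ 0 → v ⬝ᵥ (P *ᵥ (N *ᵥ v)) < 0 := by
  obtain ⟨ε, hε, hs⟩ := aux_eps _ hN
  obtain ⟨m, hm1, hm⟩ := aux_pow _ hs
  set C : Matrix ι ι ℝ := 1 + ε • N with hC
  have hCc : (1 + (ε : ℂ) • N.map (algebraMap ℝ ℂ)) = C.map (algebraMap ℝ ℂ) := by
    ext i j
    by_cases hij : i = j
    · subst hij; simp [hC]
    · simp [hC, hij]
  have hpow : (C.map (algebraMap ℝ ℂ))^m = (C^m).map (algebraMap ℝ ℂ) := by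
    have := map_pow (algebraMap ℝ ℂ).mapMatrix C m
    simpa using this.symm
  rw [hCc, hpow] at hm
  have hpos : ∀ v : ι → ℝ, v ≠ 0 → 0 < v ⬝ᵥ v := by
    intro v hv
    rcases (dotProduct_self_star_nonneg v).lt_or_eq with h | h
    · simpa using h
    · exact absurd (by simpa using h.symm) hv
  have hnn : ∀ v : ι → ℝ, 0 ≤ v ⬝ᵥ v := fun v => by
    simpa using dotProduct_self_star_nonneg v
  have hnorm : ∀ v : ι → ℝ, ‖WithLp.toLp 2 (fun i => (v i : ℂ))‖^2 = v ⬝ᵥ v := by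
    intro v
    rw [EuclideanSpace.norm_sq_eq]
    simp [dotProduct, sq]
  have hcontr : ∀ v : ι → ℝ, v ≠ 0 → ((C^m) *ᵥ v) ⬝ᵥ ((C^m) *ᵥ v) < v ⬝ᵥ v := by
    intro v hv
    have h1 := Matrix.l2_opNorm_mulVec ((C^m).map (algebraMap ℝ ℂ))
      (WithLp.toLp 2 (fun i => (v i : ℂ)))
    have h2 : ((C^m).map (algebraMap ℝ ℂ)) *ᵥ (fun i => (v i : ℂ)) =
        fun i => (((C^m) *ᵥ v) i : ℂ) := by
      ext i; simp [Matrix.mulVec, dotProduct]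
    simp only [h2] at h1
    rw [← hnorm, ← hnorm]
    have h3 : 0 < ‖WithLp.toLp 2 (fun i => (v i : ℂ))‖ := by
      have h4 := hpos v hv
      rw [← hnorm] at h4
      by_contra hcon
      have : ‖WithLp.toLp 2 (fun i => (v i : ℂ))‖ = 0 := le_antisymm (not_lt.1 hcon) (norm_nonneg _)
      rw [this] at h4; simp at h4
    apply pow_lt_pow_left₀ _ (norm_nonneg _) two_ne_zero
    refine lt_of_le_of_lt h1 ?_
    change ‖(C ^ m).map (algebraMap ℝ ℂ)‖ * _ < _
    nlinarith
  let P : Matrix ι ι ℝ := ∑ k ∈ Finset.range m, (C^k)ᵀ * C^k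
  have hP : ∀ v w, v ⬝ᵥ (P *ᵥ w) = ∑ k ∈ Finset.range m, ((C^k) *ᵥ v) ⬝ᵥ ((C^k) *ᵥ w) := by
    intro v w
    simp only [P, Matrix.sum_mulVec, dotProduct_sum]
    refine Finset.sum_congr rfl fun k _ => ?_
    rw [← Matrix.mulVec_mulVec, Matrix.dotProduct_mulVec, Matrix.vecMul_transpose]
  refine ⟨P, ?_, ?_, ?_⟩
  · simp [P, Matrix.transpose_sum, Matrix.transpose_mul]
  · intro v hv
    rw [hP]
    refine Finset.sum_pos' (fun k _ => hnn _) ⟨0, Finset.mem_range.2 hm1, ?_⟩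
    simpa using hpos v hv
  · intro v hv
    have h1 : ε * (v ⬝ᵥ (P *ᵥ (N *ᵥ v))) ≤
        ∑ k ∈ Finset.range m, ((((C^(k+1)) *ᵥ v) ⬝ᵥ ((C^(k+1)) *ᵥ v)) / 2
          - (((C^k) *ᵥ v) ⬝ᵥ ((C^k) *ᵥ v)) / 2) := by
      rw [hP, Finset.mul_sum]
      refine Finset.sum_le_sum fun k _ => ?_
      have e1 : (C^(k+1)) *ᵥ v = (C^k) *ᵥ v + ε • ((C^k) *ᵥ (N *ᵥ v)) := by
        rw [pow_succ, ← Matrix.mulVec_mulVec, hC, Matrix.add_mulVec, Matrix.one_mulVec,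
          Matrix.mulVec_add, Matrix.smul_mulVec, Matrix.mulVec_smul]
      rw [e1]
      simp only [dotProduct_add, add_dotProduct, smul_dotProduct, dotProduct_smul, smul_eq_mul]
      rw [dotProduct_comm ((C^k) *ᵥ (N *ᵥ v)) ((C^k) *ᵥ v)]
      have := mul_nonneg (mul_nonneg hε.le hε.le) (hnn ((C^k) *ᵥ (N *ᵥ v)))
      linarith
    rw [Finset.sum_range_sub (fun k => (((C^k) *ᵥ v) ⬝ᵥ ((C^k) *ᵥ v)) / 2)] at h1
    have h2 := hcontr v hv
    simp only [pow_zero, Matrix.one_mulVec] at h1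
    have h3 : ε * (v ⬝ᵥ (P *ᵥ (N *ᵥ v))) < 0 := by linarith
    by_contra hcon
    have := mul_nonneg hε.le (not_lt.1 hcon)
    linarith

end lyap

theorem aux_psi (c R : ℝ) (hc : 0 < c) (hR : 0 < R) :
    ∃ ψ dψ : ℝ → ℝ, ContDiff ℝ (⊤ : ℕ∞) ψ ∧ Continuous dψ ∧ (∀ e, HasDerivAt ψ (dψ e) e) ∧
      HasDerivAt dψ c 0 ∧ dψ 0 = 0 ∧ (∀ e, e ≠ 0 → dψ e ≠ 0) ∧ (∀ e, |dψ e| ≤ R) ∧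
      ψ 0 = 0 ∧ (∀ e, 0 ≤ ψ e) ∧ (∀ e, e ≠ 0 → 0 < ψ e) ∧ ∀ e, R * |e| - R^2 / c ≤ ψ e := by
  have hpos : ∀ e : ℝ, 0 < 1 + (c / R)^2 * e^2 := fun e => by positivity
  have hsq : ∀ e : ℝ, 0 < √(1 + (c / R)^2 * e^2) := fun e => Real.sqrt_pos.2 (hpos e)
  have hder : ∀ e : ℝ, HasDerivAt (fun e : ℝ => √(1 + (c / R)^2 * e^2))
      (((c/R)^2 * (2 * e)) / (2 * √(1 + (c / R)^2 * e^2))) e := by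
    intro e
    have h1 : HasDerivAt (fun e : ℝ => 1 + (c / R)^2 * e^2) ((c/R)^2 * (2 * e)) e := by
      have := ((hasDerivAt_pow 2 e).const_mul ((c/R)^2)).const_add 1
      simpa using this
    exact h1.sqrt (hpos e).ne'
  have hlow : ∀ e : ℝ, c / R * |e| ≤ √(1 + (c / R)^2 * e^2) := by
    intro e
    apply Real.le_sqrt_of_sq_le
    rw [mul_pow, sq_abs]; linarith
  refine ⟨fun e => R^2 / c * (√(1 + (c / R)^2 * e^2) - 1),
    fun e => c * e / √(1 + (c / R)^2 * e^2), ?_, ?_, ?_, ?_, ?_, ?_, ?_, ?_, ?_, ?_, ?_⟩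
  · refine contDiff_const.mul (ContDiff.sub (ContDiff.sqrt ?_ fun e => (hpos e).ne') contDiff_const)
    fun_prop
  · exact Continuous.div (by fun_prop) (by fun_prop) (fun e => (hsq e).ne')
  · intro e
    have := ((hder e).sub_const 1).const_mul (R^2/c)
    refine this.congr_deriv ?_
    have := (hsq e).ne'
    field_simp
  · have h1 : HasDerivAt (fun e : ℝ => c * e) c 0 := by
      simpa using (hasDerivAt_id (0:ℝ)).const_mul c
    have := h1.div (hder 0) (hsq 0).ne'
    simpa using! this
  · simp
  · intro e he
    exact div_ne_zero (mul_ne_zero hc.ne' he) (hsq e).ne'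
  · intro e
    rw [abs_div, abs_mul, abs_of_pos hc, abs_of_pos (hsq e), div_le_iff₀ (hsq e)]
    have := mul_le_mul_of_nonneg_left (hlow e) hR.le
    have e1 : R * (c / R * |e|) = c * |e| := by field_simp
    linarith
  · simp
  · intro e
    have : 1 ≤ √(1 + (c / R)^2 * e^2) := by
      apply Real.le_sqrt_of_sq_le
      nlinarith [mul_nonneg (sq_nonneg (c/R)) (sq_nonneg e)]
    exact mul_nonneg (by positivity) (by linarith)
  · intro e he
    have : 1 < √(1 + (c / R)^2 * e^2) := by
      apply Real.lt_sqrt_of_sq_lt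
      have : 0 < (c/R)^2 * e^2 := by positivity
      linarith
    exact mul_pos (by positivity) (by linarith)
  · intro e
    have := mul_le_mul_of_nonneg_left (hlow e) (show 0 ≤ R^2 / c by positivity)
    have e1 : R^2 / c * (c / R * |e|) = R * |e| := by field_simp
    change _ ≤ R^2 / c * (√(1 + (c / R)^2 * e^2) - 1)
    linarith

theorem aux_antideriv (κ : ℝ → ℝ) (hκ : ContDiff ℝ (⊤ : ℕ∞) κ) (h1 : ∀ v, 1 ≤ κ v) :
    ∃ l : ℝ → ℝ, ContDiff ℝ (⊤ : ℕ∞) l ∧ (∀ v, HasDerivAt l (κ v) v) ∧ l 0 = 0 ∧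
      ∀ v, 0 ≤ v → v ≤ l v := by
  have hd : ∀ v, HasDerivAt (fun v => ∫ s in (0:ℝ)..v, κ s) (κ v) v := fun v =>
    intervalIntegral.integral_hasDerivAt_right (hκ.continuous.intervalIntegrable _ _)
      (hκ.continuous.stronglyMeasurableAtFilter _ _) hκ.continuous.continuousAt
  refine ⟨fun v => ∫ s in (0:ℝ)..v, κ s, ?_, hd, by simp, ?_⟩
  · rw [contDiff_infty_iff_deriv]
    refine ⟨fun v => (hd v).differentiableAt, ?_⟩
    have : deriv (fun v => ∫ s in (0:ℝ)..v, κ s) = κ := funext fun v => (hd v).deriv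
    rw [this]; exact hκ
  · intro v hv
    have := intervalIntegral.integral_mono_on (μ := MeasureTheory.volume) hv
      (f := fun _ => (1:ℝ)) (g := κ) (by simp) (hκ.continuous.intervalIntegrable _ _)
      (fun x _ => h1 x)
    simpa using this

theorem aux_schur {n : ℕ} (P : Matrix (Fin 1 ⊕ Fin n) (Fin 1 ⊕ Fin n) ℝ) (hPT : Pᵀ = P)
    (hP : ∀ v, v ≠ 0 → 0 < v ⬝ᵥ (P *ᵥ v)) :
    ∃ (a : ℝ) (m : Fin n → ℝ) (Px : Matrix (Fin n) (Fin n) ℝ), 0 < a ∧ Pxᵀ = Px ∧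
      ∀ (y w0 : ℝ) (x w : Fin n → ℝ),
        (Sum.elim (fun _ => y) x : Fin 1 ⊕ Fin n → ℝ) ⬝ᵥ (P *ᵥ (Sum.elim (fun _ => w0) w)) =
          x ⬝ᵥ (Px *ᵥ w) + a * (y - m ⬝ᵥ x) * (w0 - m ⬝ᵥ w) := by
  set a := P (Sum.inl 0) (Sum.inl 0) with ha
  have hapos : 0 < a := by
    have := hP (Pi.single (Sum.inl 0) 1) (by
      intro h
      have := congrFun h (Sum.inl 0)
      simp at this)
    simpa using this
  set b : Fin n → ℝ := fun j => P (Sum.inl 0) (Sum.inr j) with hb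
  have hb' : ∀ j, P (Sum.inr j) (Sum.inl 0) = b j := fun j => by
    have := congrFun (congrFun hPT (Sum.inl 0)) (Sum.inr j)
    simpa using this
  refine ⟨a, (-a⁻¹) • b, P.toBlocks₂₂ - a⁻¹ • Matrix.vecMulVec b b, hapos, ?_, ?_⟩
  · ext i j
    have := congrFun (congrFun hPT (Sum.inr i)) (Sum.inr j)
    simp [Matrix.vecMulVec_apply, Matrix.toBlocks₂₂] at this ⊢
    rw [this]; ring
  · intro y w0 x w
    have e1 : P *ᵥ (Sum.elim (fun _ => w0) w) =
        Sum.elim (fun _ => a * w0 + b ⬝ᵥ w) (w0 • b + P.toBlocks₂₂ *ᵥ w) := by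
      ext i
      rcases i with i | i
      · have : i = 0 := Subsingleton.elim _ _
        subst this
        simp [Matrix.mulVec, dotProduct, a, b]
      · simp [Matrix.mulVec, dotProduct, hb', Matrix.toBlocks₂₂]
        ring
    have e2 : ∀ (p q : ℝ) (r s : Fin n → ℝ), (Sum.elim (fun _ => p) r : Fin 1 ⊕ Fin n → ℝ) ⬝ᵥ
        Sum.elim (fun _ => q) s = p * q + r ⬝ᵥ s := by
      intro p q r s
      simp [dotProduct]
    rw [e1, e2]
    simp only [Matrix.sub_mulVec, Matrix.smul_mulVec, Matrix.vecMulVec_mulVec, dotProduct_add,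
      dotProduct_sub, dotProduct_smul, smul_dotProduct, smul_eq_mul,
      op_smul_eq_smul]
    rw [dotProduct_comm x b]
    field_simp
    ring

theorem aux_lin {n p : ℕ} (L : (Fin n → ℝ) →L[ℝ] ℝ) (G : Fin n → Fin p → ℝ) (u : Fin p → ℝ) :
    L ((Matrix.of G) *ᵥ u) = (fun i => L (fun k => G k i)) ⬝ᵥ u := by
  have : (Matrix.of G) *ᵥ u = ∑ i, u i • (fun k => G k i) := by
    ext k
    simp [Matrix.mulVec, dotProduct, mul_comm]
  rw [this, map_sum]
  simp [dotProduct, mul_comm]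

theorem aux_hess {n : ℕ} (V : (Fin n → ℝ) → ℝ) (hV : ContDiff ℝ (⊤ : ℕ∞) V)
    (P : Matrix (Fin n) (Fin n) ℝ) (hP : ((1:ℝ)/2) • hessianAt V 0 = P) (v w : Fin n → ℝ) :
    fderiv ℝ (fderiv ℝ V) 0 v w = 2 * (v ⬝ᵥ (P *ᵥ w)) := by
  have h1 : ∀ i j, fderiv ℝ (fderiv ℝ V) 0 (Pi.single i 1) (Pi.single j 1) = 2 * P i j := by
    intro i j
    rw [← hP]
    simp [hessianAt, iteratedFDeriv_two_apply]
  have hv : ∀ v : Fin n → ℝ, v = ∑ i, v i • Pi.single i (1:ℝ) := fun v => by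
    ext j; simp [Finset.sum_apply, Pi.single_apply]
  conv_lhs => rw [hv v, hv w]
  simp only [map_sum, map_smul, _root_.sum_apply, _root_.smul_apply, h1, smul_eq_mul]
  simp only [Matrix.mulVec, dotProduct, Finset.mul_sum]
  rw [Finset.sum_comm]
  refine Finset.sum_congr rfl fun i _ => Finset.sum_congr rfl fun j _ => by ring

theorem aux_closed {n p : ℕ}
    (h : (Fin n → ℝ) → ℝ) (f : (Fin n → ℝ) → (Fin n → ℝ)) (g : (Fin n → ℝ) → Fin n → Fin p → ℝ)
    (hh : ContDiff ℝ (⊤ : ℕ∞) h) (hf : ContDiff ℝ (⊤ : ℕ∞) f) (hg : ContDiff ℝ (⊤ : ℕ∞) g)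
    (k : (ℝ × (Fin n → ℝ)) →L[ℝ] (Fin p → ℝ)) :
    ∃ X' : (ℝ × (Fin n → ℝ)) →L[ℝ] (ℝ × (Fin n → ℝ)),
      HasFDerivAt (fun z : ℝ × (Fin n → ℝ) => (h z.2, f z.2 + (Matrix.of (g z.2)) *ᵥ (k z))) X' 0 ∧
      ∀ v, X' v = (fderiv ℝ h 0 v.2, fderiv ℝ f 0 v.2 + (Matrix.of (g 0)) *ᵥ (k v)) := by
  have hs : HasFDerivAt (fun z : ℝ × (Fin n → ℝ) => z.2)
      (ContinuousLinearMap.snd ℝ ℝ (Fin n → ℝ)) 0 := hasFDerivAt_snd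
  have h1 : HasFDerivAt (fun z : ℝ × (Fin n → ℝ) => h z.2)
      ((fderiv ℝ h 0).comp (ContinuousLinearMap.snd ℝ ℝ (Fin n → ℝ))) 0 :=
    HasFDerivAt.comp (g := h) (0 : ℝ × (Fin n → ℝ))
      ((hh.differentiable (by simp)) 0).hasFDerivAt hs
  have h2 : HasFDerivAt (fun z : ℝ × (Fin n → ℝ) => f z.2)
      ((fderiv ℝ f 0).comp (ContinuousLinearMap.snd ℝ ℝ (Fin n → ℝ))) 0 :=
    HasFDerivAt.comp (g := f) (0 : ℝ × (Fin n → ℝ))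
      ((hf.differentiable (by simp)) 0).hasFDerivAt hs
  have h3 : HasFDerivAt (fun z : ℝ × (Fin n → ℝ) => (Matrix.of (g z.2)) *ᵥ (k z))
      ((Matrix.mulVecLin (Matrix.of (g 0))).toContinuousLinearMap.comp k) 0 := by
    rw [hasFDerivAt_pi']
    intro j
    have : ∀ i, HasFDerivAt (fun z : ℝ × (Fin n → ℝ) => g z.2 j i * k z i)
        (g 0 j i • ((ContinuousLinearMap.proj i : (Fin p → ℝ) →L[ℝ] ℝ).comp k)) 0 := by
      intro i
      have a1 : DifferentiableAt ℝ (fun z : ℝ × (Fin n → ℝ) => g z.2 j i) 0 := by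
        have : ContDiff ℝ (⊤ : ℕ∞) (fun z : ℝ × (Fin n → ℝ) => g z.2 j i) := by fun_prop
        exact this.differentiable (by simp) 0
      have a2 : HasFDerivAt (fun z : ℝ × (Fin n → ℝ) => k z i)
        ((ContinuousLinearMap.proj i : (Fin p → ℝ) →L[ℝ] ℝ).comp k) 0 :=
        ((ContinuousLinearMap.proj i : (Fin p → ℝ) →L[ℝ] ℝ).comp k).hasFDerivAt
      have := a1.hasFDerivAt.mul a2
      simpa using! this
    have hsum := HasFDerivAt.fun_sum (u := Finset.univ) (fun i _ => this i)
    refine hsum.congr_fderiv ?_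
    ext v <;> simp [Matrix.mulVec, dotProduct]
  refine ⟨_, h1.prodMk (h2.add h3), fun v => ?_⟩
  simp

theorem aux_loc2 {n p : ℕ}
    (h : (Fin n → ℝ) → ℝ) (f : (Fin n → ℝ) → (Fin n → ℝ)) (g : (Fin n → ℝ) → Fin n → Fin p → ℝ)
    (hh : ContDiff ℝ (⊤ : ℕ∞) h) (hf : ContDiff ℝ (⊤ : ℕ∞) f) (hg : ContDiff ℝ (⊤ : ℕ∞) g)
    (hh0 : h 0 = 0) (hf0 : f 0 = 0)
    (k : (ℝ × (Fin n → ℝ)) →L[ℝ] (Fin p → ℝ))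
    (V : (Fin n → ℝ) → ℝ) (hV : ContDiff ℝ (⊤ : ℕ∞) V) (hV0 : V 0 = 0) (hdV : fderiv ℝ V 0 = 0)
    (e : (ℝ × (Fin n → ℝ)) →L[ℝ] ℝ) (c : ℝ)
    (hneg : ∀ v : ℝ × (Fin n → ℝ), v ≠ 0 →
      fderiv ℝ (fderiv ℝ V) 0 v.2 (fderiv ℝ f 0 v.2 + (Matrix.of (g 0)) *ᵥ (k v)) +
      c * e v * e (fderiv ℝ h 0 v.2, fderiv ℝ f 0 v.2 + (Matrix.of (g 0)) *ᵥ (k v)) < 0)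
    (κ : ℝ → ℝ) (hκ : ContDiff ℝ (⊤ : ℕ∞) κ) (hκ0 : κ 0 = 1)
    (σ : ℝ → ℝ) (hσ : HasDerivAt σ c 0) (hσ0 : σ 0 = 0) :
    ∀ᶠ z in 𝓝[≠] (0 : ℝ × (Fin n → ℝ)),
      κ (V z.2) * fderiv ℝ V z.2 (f z.2 + (Matrix.of (g z.2)) *ᵥ (k z)) +
      σ (e z) * e (h z.2, f z.2 + (Matrix.of (g z.2)) *ᵥ (k z)) < 0 := by
  obtain ⟨X', hX', hX'v⟩ := aux_closed h f g hh hf hg k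
  let S := ContinuousLinearMap.snd ℝ ℝ (Fin n → ℝ)
  have hs : HasFDerivAt (fun z : ℝ × (Fin n → ℝ) => z.2) S 0 := hasFDerivAt_snd
  have hdVs : ContDiff ℝ (⊤ : ℕ∞) (fderiv ℝ V) := hV.fderiv_right (by simp)
  -- composition with S as a continuous linear map
  let cS : ((Fin n → ℝ) →L[ℝ] ℝ) →L[ℝ] ((ℝ × (Fin n → ℝ)) →L[ℝ] ℝ) :=
    (ContinuousLinearMap.compL ℝ (ℝ × (Fin n → ℝ)) (Fin n → ℝ) ℝ).flip S
  have hcS : ∀ L w, cS L w = L w.2 := fun L w => rfl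
  have d1 : HasFDerivAt (fun z : ℝ × (Fin n → ℝ) => fderiv ℝ V z.2)
      ((fderiv ℝ (fderiv ℝ V) 0).comp S) 0 :=
    HasFDerivAt.comp (g := fderiv ℝ V) (0 : ℝ × (Fin n → ℝ))
      ((hdVs.differentiable (by simp)) 0).hasFDerivAt hs
  have d2 : HasFDerivAt (fun z : ℝ × (Fin n → ℝ) => cS (fderiv ℝ V z.2))
      (cS.comp ((fderiv ℝ (fderiv ℝ V) 0).comp S)) 0 :=
    HasFDerivAt.comp (0 : ℝ × (Fin n → ℝ)) cS.hasFDerivAt d1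
  have d3 : DifferentiableAt ℝ (fun z : ℝ × (Fin n → ℝ) => κ (V z.2)) 0 := by
    have : ContDiff ℝ (⊤ : ℕ∞) (fun z : ℝ × (Fin n → ℝ) => κ (V z.2)) := by fun_prop
    exact this.differentiable (by simp) 0
  have d4 := d3.hasFDerivAt.smul d2
  have d5 : HasFDerivAt (fun z : ℝ × (Fin n → ℝ) => σ (e z)) (c • e) 0 := by
    have hσ' : HasDerivAt σ c (e 0) := by simpa using hσ
    exact hσ'.comp_hasFDerivAt (0 : ℝ × (Fin n → ℝ)) e.hasFDerivAt
  have d6 := d5.smul_const e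
  have key := aux_local _ _ _ X' (d4.add d6) hX' (by
      ext <;> simp [hdV, hσ0]) (by
      simp [hh0, hf0]) (fun v hv => by
      have := hneg v hv
      rw [hX'v]
      simpa [hcS, hdV, hV0, hκ0, S] using this)
  filter_upwards [key] with z hz
  simpa [hcS] using hz

/-- forwarding case. For the feedforward system
`y' = h x`, `x' = f x + g x · u` (`y` scalar), if the `x`-subsystem satisfies the
local-behavior assumption (Assumption 3), then for every `K` making `A + BK` Hurwitz
there is a smooth feedback `α₀` with `α₀ 0 = 0` and `Dα₀(0) = K` rendering the origin of
the closed loop globally asymptotically stable. -/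
theorem stmt5 {nx p : ℕ}
    (h : (Fin nx → ℝ) → ℝ) (f : (Fin nx → ℝ) → (Fin nx → ℝ))
    (g : (Fin nx → ℝ) → Fin nx → Fin p → ℝ)
    (hh : ContDiff ℝ (⊤ : ℕ∞) h) (hf : ContDiff ℝ (⊤ : ℕ∞) f) (hg : ContDiff ℝ (⊤ : ℕ∞) g)
    (hh0 : h 0 = 0) (hf0 : f 0 = 0)
    -- first-order approximation data
    (H : Fin nx → ℝ) (F : Matrix (Fin nx) (Fin nx) ℝ)
    (hH : ∀ v, fderiv ℝ h 0 v = H ⬝ᵥ v)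
    (hF : ∀ v, fderiv ℝ f 0 v = F.mulVec v)
    (A : Matrix (Fin 1 ⊕ Fin nx) (Fin 1 ⊕ Fin nx) ℝ)
    (B : Matrix (Fin 1 ⊕ Fin nx) (Fin p) ℝ)
    (hA : A = Matrix.fromBlocks 0 (Matrix.of fun (_ : Fin 1) j => H j) 0 F)
    (hB : B = Matrix.of fun i j => Sum.elim (fun _ => (0:ℝ)) (fun k => g 0 k j) i)
    -- Assumption 3: prescribed local behavior is solvable for the `x`-subsystem
    (hass : ∀ (Kx : Matrix (Fin p) (Fin nx) ℝ) (Px : Matrix (Fin nx) (Fin nx) ℝ),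
      Px.PosDef →
      (-(Px * (F + Matrix.of (g 0) * Kx)
          + (F + Matrix.of (g 0) * Kx)ᵀ * Px)).PosDef →
      ∃ Vx : (Fin nx → ℝ) → ℝ, ContDiff ℝ (⊤ : ℕ∞) Vx ∧ (∀ x, 0 ≤ Vx x) ∧
        IsProper Vx ∧ IsPosDefFn Vx ∧ ((1:ℝ)/2) • hessianAt Vx 0 = Px ∧
        ∀ x : Fin nx → ℝ, x ≠ 0 →
          (∀ i, fderiv ℝ Vx x (fun k => g x k i) = 0) → fderiv ℝ Vx x (f x) < 0)
    (K : Matrix (Fin p) (Fin 1 ⊕ Fin nx) ℝ)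
    (hHurwitz : Hurwitz (A + B * K)) :
    ∃ α₀ : (ℝ × (Fin nx → ℝ)) → (Fin p → ℝ), ContDiff ℝ (⊤ : ℕ∞) α₀ ∧ α₀ 0 = 0 ∧
      (∀ v : ℝ × (Fin nx → ℝ), fderiv ℝ α₀ 0 v
        = fun i => K i (Sum.inl 0) * v.1 + ∑ j, K i (Sum.inr j) * v.2 j) ∧
      IsGAS (fun z : ℝ × (Fin nx → ℝ) =>
        (h z.2, f z.2 + (Matrix.of (g z.2)).mulVec (α₀ z))) := by
  have hne : Nonempty (Fin 1 ⊕ Fin nx) := ⟨Sum.inl 0⟩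
  obtain ⟨P, hPT, hPpos, hPneg⟩ := aux_lyap _ hHurwitz
  obtain ⟨a, m, Px, ha, hPxT, hid⟩ := aux_schur P hPT hPpos
  -- the linear feedback
  let k : (ℝ × (Fin nx → ℝ)) →L[ℝ] (Fin p → ℝ) := LinearMap.toContinuousLinearMap
    { toFun := fun v => fun i => K i (Sum.inl 0) * v.1 + ∑ j, K i (Sum.inr j) * v.2 j
      map_add' := fun v w => by
        ext i
        simp [mul_add, Finset.sum_add_distrib]
        ring
      map_smul' := fun c v => by
        ext i
        simp [mul_add, Finset.mul_sum]
        simp only [mul_left_comm] }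
  have hk : ∀ v, k v = fun i => K i (Sum.inl 0) * v.1 + ∑ j, K i (Sum.inr j) * v.2 j :=
    fun v => rfl
  have hNv : ∀ (y : ℝ) (x : Fin nx → ℝ), (A + B * K) *ᵥ (Sum.elim (fun _ => y) x) =
      Sum.elim (fun _ => H ⬝ᵥ x) (F *ᵥ x + Matrix.of (g 0) *ᵥ k (y, x)) := by
    intro y x
    rw [hA, hB, Matrix.add_mulVec, ← Matrix.mulVec_mulVec]
    have hKv : K *ᵥ (Sum.elim (fun _ => y) x) = k (y, x) := by
      rw [hk]; ext i
      simp [Matrix.mulVec, dotProduct]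
    rw [hKv]
    ext i
    rcases i with i | i
    · simp [Matrix.mulVec, dotProduct]
    · simp [Matrix.mulVec, dotProduct]
  have hquad : ∀ (y : ℝ) (x : Fin nx → ℝ), (y, x) ≠ (0 : ℝ × (Fin nx → ℝ)) →
      x ⬝ᵥ (Px *ᵥ (F *ᵥ x + Matrix.of (g 0) *ᵥ k (y, x))) + a * (y - m ⬝ᵥ x) *
        (H ⬝ᵥ x - m ⬝ᵥ (F *ᵥ x + Matrix.of (g 0) *ᵥ k (y, x))) < 0 := by
    intro y x hyx
    have h1 := hPneg (Sum.elim (fun _ => y) x) (by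
      intro h0
      apply hyx
      have e1 : y = 0 := by simpa using congrFun h0 (Sum.inl 0)
      have e2 : x = 0 := by ext j; simpa using congrFun h0 (Sum.inr j)
      rw [e1, e2]; rfl)
    rw [hNv, hid] at h1
    exact h1
  let Kx : Matrix (Fin p) (Fin nx) ℝ := Matrix.of fun i j => K i (Sum.inl 0) * m j + K i (Sum.inr j)
  have hKx : ∀ x, Kx *ᵥ x = k (m ⬝ᵥ x, x) := by
    intro x
    rw [hk]; ext i
    simp only [Kx, Matrix.mulVec, dotProduct, Matrix.of_apply, add_mul, Finset.sum_add_distrib,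
      Finset.mul_sum, mul_assoc]
  have hPxpos : Px.PosDef := by
    refine Matrix.PosDef.of_dotProduct_mulVec_pos (by
      rw [Matrix.IsHermitian, Matrix.conjTranspose_eq_transpose_of_trivial, hPxT]) ?_
    intro x hx
    have h1 := hPpos (Sum.elim (fun _ => m ⬝ᵥ x) x) (by
      intro h0
      apply hx
      ext j; simpa using congrFun h0 (Sum.inr j))
    rw [hid] at h1
    simpa using h1
  obtain ⟨Vx, hVx, hVnn, hVp, hVpd, hVh, hVclf⟩ := hass Kx Px hPxpos (by
    set S := F + Matrix.of (g 0) * Kx with hS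
    refine Matrix.PosDef.of_dotProduct_mulVec_pos (by
      rw [Matrix.IsHermitian, Matrix.conjTranspose_eq_transpose_of_trivial]
      simp [Matrix.transpose_mul, hPxT, add_comm]) ?_
    intro x hx
    have h1 := hquad (m ⬝ᵥ x) x (by
      intro h0; exact hx (congrArg Prod.snd h0))
    have hSx : S *ᵥ x = F *ᵥ x + Matrix.of (g 0) *ᵥ k (m ⬝ᵥ x, x) := by
      rw [hS, Matrix.add_mulVec, ← Matrix.mulVec_mulVec, hKx]
    rw [← hSx] at h1
    have h2 : x ⬝ᵥ ((Sᵀ * Px) *ᵥ x) = x ⬝ᵥ ((Px * S) *ᵥ x) := by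
      have : (Sᵀ * Px) = (Px * S)ᵀ := by rw [Matrix.transpose_mul, hPxT]
      rw [this, Matrix.dotProduct_mulVec, Matrix.vecMul_transpose, dotProduct_comm]
    rw [star_trivial, Matrix.neg_mulVec, Matrix.add_mulVec, dotProduct_neg, dotProduct_add, h2,
      ← Matrix.mulVec_mulVec]
    rw [sub_self, mul_zero, zero_mul, add_zero] at h1
    linarith)
  have hdV0 : fderiv ℝ Vx 0 = 0 := by
    apply IsLocalMin.fderiv_eq_zero
    exact Eventually.of_forall fun x => by rw [hVpd.1]; exact hVnn x
  -- linear form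
  let mL : (Fin nx → ℝ) →L[ℝ] ℝ := LinearMap.toContinuousLinearMap
    { toFun := fun x => m ⬝ᵥ x
      map_add' := fun x y => dotProduct_add _ _ _
      map_smul' := fun c x => dotProduct_smul _ _ _ }
  have hmL : ∀ x, mL x = m ⬝ᵥ x := fun x => rfl
  let e : (ℝ × (Fin nx → ℝ)) →L[ℝ] ℝ := ContinuousLinearMap.fst ℝ ℝ (Fin nx → ℝ) -
    mL.comp (ContinuousLinearMap.snd ℝ ℝ (Fin nx → ℝ))
  have he : ∀ z, e z = z.1 - mL z.2 := fun z => rfl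
  set c := 2 * a with hc
  have hcpos : 0 < c := by positivity
  have hneg : ∀ v : ℝ × (Fin nx → ℝ), v ≠ 0 →
      fderiv ℝ (fderiv ℝ Vx) 0 v.2 (fderiv ℝ f 0 v.2 + (Matrix.of (g 0)) *ᵥ (k v)) +
      c * e v * e (fderiv ℝ h 0 v.2, fderiv ℝ f 0 v.2 + (Matrix.of (g 0)) *ᵥ (k v)) < 0 := by
    intro v hv
    have h1 := hquad v.1 v.2 hv
    rw [aux_hess Vx hVx Px hVh, hF, hH, he, he, hmL, hmL]
    simp only [Prod.mk.eta] at h1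
    simp only
    rw [hc]
    linarith
  have hloc := fun κ hκ hκ0 σ hσ hσ0 => aux_loc2 h f g hh hf hg hh0 hf0 k Vx hVx hVpd.1 hdV0 e c
    hneg κ hκ hκ0 σ hσ hσ0
  -- Lie derivatives
  let a0 : (Fin nx → ℝ) → ℝ := fun x => fderiv ℝ Vx x (f x)
  let a1 : (Fin nx → ℝ) → ℝ := fun x => h x - mL (f x)
  let b0 : (Fin nx → ℝ) → Fin p → ℝ := fun x i => fderiv ℝ Vx x (fun k => g x k i)
  let b1 : (Fin nx → ℝ) → Fin p → ℝ := fun x i => - mL (fun k => g x k i)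
  have hdVc : Continuous (fderiv ℝ Vx) := hVx.continuous_fderiv (by simp)
  have hfc := hf.continuous
  have hgc := hg.continuous
  have hhc := hh.continuous
  have hgi : ∀ i, Continuous (fun x => (fun k => g x k i)) := fun i => by fun_prop
  have ha0 : Continuous a0 := hdVc.clm_apply hfc
  have ha1 : Continuous a1 := hhc.sub (mL.continuous.comp hfc)
  have hb0 : Continuous b0 := continuous_pi fun i => hdVc.clm_apply (hgi i)
  have hb1 : Continuous b1 := continuous_pi fun i => (mL.continuous.comp (hgi i)).neg
  have hexp : ∀ (κ q : ℝ) (x : Fin nx → ℝ) (u : Fin p → ℝ),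
      κ * fderiv ℝ Vx x (f x + (Matrix.of (g x)) *ᵥ u) +
        q * e (h x, f x + (Matrix.of (g x)) *ᵥ u) =
      (κ * a0 x + q * a1 x) + (κ • b0 x + q • b1 x) ⬝ᵥ u := by
    intro κ q x u
    rw [he]
    simp only
    rw [map_add, map_add, aux_lin, aux_lin]
    have : b1 x = -(fun i => mL (fun k => g x k i)) := rfl
    rw [this, add_dotProduct, smul_dotProduct, smul_dotProduct, neg_dotProduct]
    simp only [a0, a1, b0, smul_eq_mul]
    ring
  have hclf0 : ∀ x, x ≠ 0 → b0 x = 0 → a0 x < 0 := fun x hx hb =>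
    hVclf x hx (fun i => congrFun hb i)
  obtain ⟨R, hR, hRloc⟩ : ∃ R > 0, ∀ (q : ℝ) (x : Fin nx → ℝ), |q| ≤ R → ‖x‖ ≤ R →
      (q ≠ 0 ∨ x ≠ 0) → b0 x + q • b1 x = 0 → a0 x + q * a1 x < 0 := by
    have h1 := hloc (fun _ => 1) contDiff_const rfl (fun s => c * s)
      (by simpa using (hasDerivAt_id (0:ℝ)).const_mul c) (by simp)
    rw [eventually_nhdsWithin_iff] at h1
    let T : ℝ × (Fin nx → ℝ) → ℝ × (Fin nx → ℝ) := fun w => (w.1 / c + mL w.2, w.2)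
    have hT : Tendsto T (𝓝 0) (𝓝 0) := by
      have : Continuous T := by fun_prop
      simpa [T] using! this.tendsto 0
    obtain ⟨R, hR, hball⟩ := Metric.nhds_basis_closedBall.eventually_iff.1 (hT.eventually h1)
    refine ⟨R, hR, fun q x hq hx hne hb => ?_⟩
    have h2 := hball (x := (q, x)) (by simpa [Prod.norm_def] using ⟨hq, hx⟩) (by
      intro h0
      have h0' : T (q, x) = 0 := h0
      have e2 : x = 0 := congrArg Prod.snd h0'
      have e1 : q / c + mL x = 0 := congrArg Prod.fst h0'
      rcases hne with h | h
      · rw [e2, map_zero, add_zero] at e1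
        rcases div_eq_zero_iff.1 e1 with h3 | h3
        · exact h h3
        · exact hcpos.ne' h3
      · exact h e2)
    have hTe : c * e (T (q, x)) = q := by
      rw [he]
      simp only [T]
      field_simp
      ring
    simp only [hTe] at h2
    rw [hexp] at h2
    simp only [T, one_mul, one_smul] at h2
    rw [hb, zero_dotProduct, add_zero] at h2
    exact h2
  obtain ⟨κ, hκ, hκ1, hκ0, hκclf⟩ := aux_kappa Vx hVx.continuous hVp hVpd a0 a1 b0 b1 ha0 ha1 hb0 hb1
    hclf0 R hR hRloc
  obtain ⟨ψ, dψ, hψ, hdψc, hψd, hdψd, hdψ0, hdψne, hdψR, hψ0, hψnn, hψpos, hψlow⟩ :=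
    aux_psi c R hcpos hR
  obtain ⟨l, hl, hld, hl0, hlge⟩ := aux_antideriv κ hκ hκ1
  let V : ℝ × (Fin nx → ℝ) → ℝ := fun z => l (Vx z.2) + ψ (e z)
  have hV : ContDiff ℝ (⊤ : ℕ∞) V := by
    have := e.contDiff (n := (⊤ : ℕ∞))
    fun_prop
  have hVd : ∀ z w, fderiv ℝ V z w = κ (Vx z.2) * fderiv ℝ Vx z.2 w.2 + dψ (e z) * e w := by
    intro z w
    have d0 : HasFDerivAt (fun z : ℝ × (Fin nx → ℝ) => Vx z.2)
        ((fderiv ℝ Vx z.2).comp (ContinuousLinearMap.snd ℝ ℝ (Fin nx → ℝ))) z :=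
      HasFDerivAt.comp (g := Vx) z ((hVx.differentiable (by simp)) z.2).hasFDerivAt hasFDerivAt_snd
    have d1 := (hld (Vx z.2)).comp_hasFDerivAt z d0
    have d2 := (hψd (e z)).comp_hasFDerivAt z e.hasFDerivAt
    have d3 : HasFDerivAt V _ z := d1.add d2
    rw [d3.fderiv]
    simp
  have hVpd' : IsPosDefFn V := by
    refine ⟨by simp [V, hVpd.1, hl0, hψ0], fun z hz => ?_⟩
    by_cases hx : z.2 = 0
    · have hy : z.1 ≠ 0 := fun hy => hz (Prod.ext hy hx)
      have h1 : e z ≠ 0 := by rw [he, hx, map_zero, sub_zero]; exact hy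
      have h2 := hlge (Vx z.2) (hVnn _)
      have h3 := hψpos _ h1
      have h4 := hVnn z.2
      simp only [V]; linarith
    · have h2 := hlge (Vx z.2) (hVnn _)
      have h3 := hψnn (e z)
      have h4 := hVpd.2 z.2 hx
      simp only [V]; linarith
  have hVp' : IsProper V := by
    rw [IsProper, tendsto_atTop]
    intro b
    obtain ⟨r, hr⟩ := aux_bddsub Vx hVp b
    have hbd : Bornology.IsBounded {z | ¬ b ≤ V z} := by
      rw [isBounded_iff_forall_norm_le]
      refine ⟨max r ((b + R^2/c) / R + ‖mL‖ * r), fun z hz => ?_⟩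
      have hz' : V z < b := not_le.1 hz
      have h2 := hlge (Vx z.2) (hVnn _)
      have h3 := hψnn (e z)
      have h4 := hVnn z.2
      have h5 := hψlow (e z)
      simp only [V] at hz'
      have hx := hr z.2 (by linarith)
      have hex : |e z| ≤ (b + R^2/c) / R := by
        rw [le_div_iff₀ hR]; linarith
      have hmx : |mL z.2| ≤ ‖mL‖ * r :=
        (mL.le_opNorm z.2).trans (mul_le_mul_of_nonneg_left hx (norm_nonneg _))
      have hy : |z.1| ≤ (b + R^2/c) / R + ‖mL‖ * r := by
        have : z.1 = e z + mL z.2 := by rw [he]; ring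
        rw [this]
        exact (abs_add_le _ _).trans (add_le_add hex hmx)
      rw [Prod.norm_def]
      exact max_le (hy.trans (le_max_right _ _)) (hx.trans (le_max_left _ _))
    have := Bornology.isBounded_def.1 hbd
    filter_upwards [this] with z hz
    simpa using hz
  have hκc := hκ.continuous
  have hVxc := hVx.continuous
  obtain ⟨α, hα, hαk, hαneg⟩ := aux_feedback (E := ℝ × (Fin nx → ℝ))
    (fun z => κ (Vx z.2) * a0 z.2 + dψ (e z) * a1 z.2)
    (fun z => κ (Vx z.2) • b0 z.2 + dψ (e z) • b1 z.2)
    (by fun_prop) (by fun_prop) k (fun z hz hb => by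
      refine hκclf (dψ (e z)) z.2 (hdψR _) ?_ hb
      by_cases hx : z.2 = 0
      · left
        apply hdψne
        rw [he, hx, map_zero, sub_zero]
        exact fun hy => hz (Prod.ext hy hx)
      · exact Or.inr hx) (by
      filter_upwards [hloc κ hκ hκ0 dψ hdψd hdψ0] with z hz
      rw [hexp] at hz
      exact hz)
  have hα0 : α 0 = 0 := by rw [hαk.eq_of_nhds, map_zero]
  refine ⟨α, hα, hα0, fun v => ?_, ?_⟩
  · rw [hαk.fderiv_eq, k.fderiv, hk]
  · refine aux_gas V hV hVp' hVpd' _ ?_ ?_ ?_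
    · refine ContDiff.prodMk (by fun_prop) (ContDiff.add (by fun_prop) ?_)
      rw [contDiff_pi]
      intro j
      simp only [Matrix.mulVec, dotProduct, Matrix.of_apply]
      fun_prop
    · simp [hh0, hf0, hα0]
    · intro z hz
      rw [hVd]
      simp only
      rw [hexp]
      exact hαneg z hz
end
end

section
/- Let V: ℝ^n → ℝ≥0 be a C² proper positive definite function with ∇V(0) = 0 and P := (1/2)·H(V)(0), let a: ℝ^n → ℝ^n be C¹ with a(0) = 0 and A := Da(0), let b: ℝ^n → ℝ^{n×p} be continuous with B := b(0), and let K ∈ ℝ^{p×n}. If (A + BK)ᵀP + P(A + BK) is negative definite, then there exists r₀ > 0 such that for all χ ∈ ℝ^n with 0 < V(χ) ≤ r₀, ∇V(χ)·(a(χ) + b(χ)Kχ) < 0. -/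
open Matrix Filter Topology Asymptotics

noncomputable section

lemma aux_littleO {E : Type*} [NormedAddCommGroup E] [NormedSpace ℝ E]
    (L : E →L[ℝ] E →L[ℝ] ℝ) (F : E →L[ℝ] E) (G : E → E →L[ℝ] ℝ) (f : E → E)
    (hG : (fun x => G x - L x) =o[𝓝 0] (fun x : E => x))
    (hf : (fun x => f x - F x) =o[𝓝 0] (fun x : E => x)) :
    (fun x => G x (f x) - L x (F x)) =o[𝓝 0] (fun x : E => ‖x‖ * ‖x‖) := by
  have hfO : f =O[𝓝 0] (fun x : E => x) := by
    have := hf.isBigO.add (F.isBigO_id (𝓝 0))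
    simpa using this
  have h1 : (fun x => (G x - L x) (f x)) =o[𝓝 0] (fun x : E => ‖x‖ * ‖x‖) := by
    have h := hG.norm_norm.mul_isBigO hfO.norm_norm
    refine IsBigO.trans_isLittleO (IsBigO.of_bound 1 (Eventually.of_forall fun x => ?_)) h
    simpa using (G x - L x).le_opNorm (f x)
  have h2 : (fun x => L x (f x - F x)) =o[𝓝 0] (fun x : E => ‖x‖ * ‖x‖) := by
    have h := (L.isBigO_id (𝓝 0)).norm_norm.mul_isLittleO hf.norm_norm
    refine IsBigO.trans_isLittleO (IsBigO.of_bound 1 (Eventually.of_forall fun x => ?_)) h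
    simpa using (L x).le_opNorm (f x - F x)
  refine (h1.add h2).congr_left fun x => ?_
  simp

lemma aux_coercive {n : ℕ} (q : (Fin n → ℝ) → ℝ) (hq : Continuous q)
    (hh : ∀ (t : ℝ) x, q (t • x) = t ^ 2 * q x) (hpos : ∀ x, x ≠ 0 → 0 < q x) :
    ∃ c > 0, ∀ x, c * (‖x‖ * ‖x‖) ≤ q x := by
  have hq0 : q 0 = 0 := by simpa using hh 0 0
  have hc : IsCompact (Metric.sphere (0 : Fin n → ℝ) 1) := isCompact_sphere _ _
  obtain ⟨c, hc0, hcb⟩ : ∃ c > 0, ∀ x ∈ Metric.sphere (0 : Fin n → ℝ) 1, c ≤ q x := by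
    rcases (Metric.sphere (0 : Fin n → ℝ) 1).eq_empty_or_nonempty with he | hne
    · exact ⟨1, one_pos, by simp [he]⟩
    · obtain ⟨y, hy, hmin⟩ := hc.exists_isMinOn hne hq.continuousOn
      refine ⟨q y, hpos y ?_, fun x hx => hmin hx⟩
      rintro rfl
      simp at hy
  refine ⟨c, hc0, fun x => ?_⟩
  by_cases hx : x = 0
  · subst hx; simp [hq0]
  have hn : 0 < ‖x‖ := norm_pos_iff.mpr hx
  have h1 := hcb (‖x‖⁻¹ • x) (by simp [norm_smul, hn.ne'])
  have h2 : q x = ‖x‖ ^ 2 * q (‖x‖⁻¹ • x) := by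
    rw [← hh, smul_smul, mul_inv_cancel₀ hn.ne', one_smul]
  rw [h2]
  nlinarith [mul_le_mul_of_nonneg_left h1 (sq_nonneg ‖x‖)]

lemma aux_sublevel_s6 {n : ℕ} (V : (Fin n → ℝ) → ℝ) (hV : Continuous V)
    (hp : IsProper V) (hpos : IsPosDefFn V) (ε : ℝ) (hε : 0 < ε) :
    ∃ r > 0, ∀ x, V x ≤ r → ‖x‖ < ε := by
  have h1 : ∀ᶠ x in Bornology.cobounded (Fin n → ℝ), 1 < V x := hp.eventually_gt_atTop 1
  obtain ⟨R, -, hR⟩ := (Metric.hasBasis_cobounded_compl_closedBall (0 : Fin n → ℝ)).eventually_iff.1 h1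
  have hc : IsCompact (Metric.closedBall (0 : Fin n → ℝ) R ∩ {x | ε ≤ ‖x‖}) :=
    (isCompact_closedBall _ _).inter_right (isClosed_le continuous_const continuous_norm)
  obtain ⟨m, hm, hmb⟩ : ∃ m > 0, ∀ x ∈ Metric.closedBall (0 : Fin n → ℝ) R ∩ {x | ε ≤ ‖x‖},
      m ≤ V x := by
    rcases (Metric.closedBall (0 : Fin n → ℝ) R ∩ {x | ε ≤ ‖x‖}).eq_empty_or_nonempty with he | hne
    · exact ⟨1, one_pos, by simp [he]⟩
    · obtain ⟨y, hy, hmin⟩ := hc.exists_isMinOn hne hV.continuousOn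
      refine ⟨V y, hpos.2 y ?_, fun x hx => hmin hx⟩
      rintro rfl
      have := hy.2
      simp at this
      linarith
  refine ⟨min 1 m / 2, by positivity, fun x hx => ?_⟩
  by_contra hcon
  have hlt : min 1 m / 2 < min 1 m := half_lt_self (by positivity)
  by_cases hxR : x ∈ Metric.closedBall (0 : Fin n → ℝ) R
  · have := hmb x ⟨hxR, not_lt.1 hcon⟩
    linarith [min_le_right 1 m]
  · have := hR hxR
    linarith [min_le_left 1 m]

lemma aux_hess_s6 {n : ℕ} (V : (Fin n → ℝ) → ℝ) (x y : Fin n → ℝ) :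
    x ⬝ᵥ (hessianAt V 0 *ᵥ y) = fderiv ℝ (fderiv ℝ V) 0 x y := by
  have hx : x = ∑ i, x i • (Pi.single i 1 : Fin n → ℝ) := pi_eq_sum_univ' x
  have hy : y = ∑ i, y i • (Pi.single i 1 : Fin n → ℝ) := pi_eq_sum_univ' y
  conv_rhs => rw [hx, hy]
  simp only [map_sum, map_smul, FunLike.coe_sum, Finset.sum_apply, FunLike.coe_smul,
    Pi.smul_apply, dotProduct, mulVec, hessianAt, iteratedFDeriv_two_apply, smul_eq_mul,
    Finset.mul_sum, of_apply, cons_val_zero, cons_val_one]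
  rw [Finset.sum_comm]
  refine Finset.sum_congr rfl fun i _ => Finset.sum_congr rfl fun j _ => ?_
  ring

lemma aux_b {n p : ℕ} (b : (Fin n → ℝ) → Fin n → Fin p → ℝ) (hb : Continuous b)
    (K : Matrix (Fin p) (Fin n) ℝ) :
    (fun x => (Matrix.of (b x)) *ᵥ (K *ᵥ x) - (Matrix.of (b 0)) *ᵥ (K *ᵥ x))
      =o[𝓝 0] (fun x : Fin n → ℝ => x) := by
  rw [isLittleO_pi]
  intro i
  have key : ∀ j, (fun x => (b x i j - b 0 i j) * (K *ᵥ x) j) =o[𝓝 0]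
      (fun x : Fin n → ℝ => x) := by
    intro j
    have h1 : (fun x => b x i j - b 0 i j) =o[𝓝 0] (fun _ : Fin n → ℝ => (1 : ℝ)) := by
      rw [isLittleO_one_iff]
      have : Continuous fun x => b x i j - b 0 i j := by fun_prop
      simpa using this.tendsto 0
    have h2 : (fun x => (K *ᵥ x) j) =O[𝓝 0] (fun x : Fin n → ℝ => ‖x‖) := by
      have h := ((LinearMap.toContinuousLinearMap (Matrix.mulVecLin K)).isBigO_id (𝓝 0)).norm_right
      exact (isBigO_pi.1 h) j
    have h3 := h1.mul_isBigO h2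
    simp only [one_mul] at h3
    exact h3.of_norm_right
  refine (IsLittleO.sum (s := Finset.univ) fun j _ => key j).congr_left fun x => ?_
  simp only [Finset.sum_apply, Pi.sub_apply, sub_mul, Finset.sum_sub_distrib]
  rfl

/-- If `V` is `C²` proper positive definite with `∇V(0) = 0`,
`P := ½ H(V)(0)`, and `(A+BK)ᵀP + P(A+BK)` is negative definite, then on a small
sublevel set `{0 < V ≤ r₀}` the linear feedback `u = Kχ` makes `V` strictly decrease. -/
theorem stmt6 {n p : ℕ}
    (V : (Fin n → ℝ) → ℝ)
    (hV : ContDiff ℝ 2 V) (hVnonneg : ∀ χ, 0 ≤ V χ)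
    (hVproper : IsProper V) (hVpos : IsPosDefFn V)
    (hgrad0 : fderiv ℝ V 0 = 0)
    (a : (Fin n → ℝ) → (Fin n → ℝ)) (b : (Fin n → ℝ) → Fin n → Fin p → ℝ)
    (A : Matrix (Fin n) (Fin n) ℝ) (B : Matrix (Fin n) (Fin p) ℝ)
    (K : Matrix (Fin p) (Fin n) ℝ)
    (ha : ContDiff ℝ 1 a) (ha0 : a 0 = 0)
    (hA : ∀ v, fderiv ℝ a 0 v = A.mulVec v)
    (hb : Continuous b) (hB : B = Matrix.of (b 0))
    (hLyap : (-((A + B * K)ᵀ * (((1:ℝ)/2) • hessianAt V 0)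
        + (((1:ℝ)/2) • hessianAt V 0) * (A + B * K))).PosDef) :
    ∃ r₀ > (0:ℝ), ∀ χ : Fin n → ℝ, 0 < V χ → V χ ≤ r₀ →
      fderiv ℝ V χ (a χ + (Matrix.of (b χ)).mulVec (K.mulVec χ)) < 0 := by
  set L := fderiv ℝ (fderiv ℝ V) 0 with hL
  have hsym : ∀ v w, L v w = L w v := fun v w =>
    (hV.contDiffAt.isSymmSndFDerivAt (x := 0) (by simp)) v w
  let F : (Fin n → ℝ) →L[ℝ] (Fin n → ℝ) :=
    LinearMap.toContinuousLinearMap (Matrix.mulVecLin (A + B * K))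
  have hF : ∀ x, F x = (A + B * K) *ᵥ x := fun x => rfl
  have hG : (fun x => fderiv ℝ V x - L x) =o[𝓝 0] (fun x : Fin n → ℝ => x) := by
    have hd : DifferentiableAt ℝ (fderiv ℝ V) 0 :=
      (hV.fderiv_right (m := 1) (by norm_num)).differentiable (by norm_num) 0
    have := hd.hasFDerivAt.isLittleO
    simpa [hgrad0] using this
  have hf : (fun x => (a x + (Matrix.of (b x)) *ᵥ (K *ᵥ x)) - F x) =o[𝓝 0]
      (fun x : Fin n → ℝ => x) := by
    have hd : DifferentiableAt ℝ a 0 := ha.differentiable (by norm_num) 0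
    have h1 := hd.hasFDerivAt.isLittleO
    simp only [ha0, sub_zero, hA] at h1
    refine (h1.add (aux_b b hb K)).congr_left fun x => ?_
    rw [hF, hB, add_mulVec, ← mulVec_mulVec]
    abel
  have hpos : ∀ x, x ≠ 0 → 0 < - L x (F x) := by
    intro x hx
    have h := (posDef_iff_dotProduct_mulVec.1 hLyap).2 hx
    have e1 : x ⬝ᵥ (((A + B * K)ᵀ * hessianAt V 0) *ᵥ x) = L x (F x) := by
      rw [← mulVec_mulVec, dotProduct_mulVec, vecMul_transpose, aux_hess_s6, ← hF, hsym]
    have e2 : x ⬝ᵥ ((hessianAt V 0 * (A + B * K)) *ᵥ x) = L x (F x) := by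
      rw [← mulVec_mulVec, aux_hess_s6, hF]
    simp only [star_trivial, neg_mulVec, add_mulVec, dotProduct_neg, dotProduct_add,
      Matrix.mul_smul, Matrix.smul_mul, smul_mulVec, dotProduct_smul, e1, e2, smul_eq_mul] at h
    linarith
  obtain ⟨c, hc, hcb⟩ := aux_coercive (fun x => - L x (F x)) (by fun_prop)
    (by intro t x; simp; ring) hpos
  have hO := (aux_littleO L F (fderiv ℝ V) _ hG hf).def (half_pos hc)
  obtain ⟨ε, hε, hball⟩ := Metric.eventually_nhds_iff.1 hO
  obtain ⟨r, hr, hrb⟩ := aux_sublevel_s6 V hV.continuous hVproper hVpos ε hε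
  refine ⟨r, hr, fun x hx hxr => ?_⟩
  have hx0 : x ≠ 0 := by
    rintro rfl
    exact hx.ne hVpos.1.symm
  have h1 := hball (y := x) (by simpa using hrb x hxr)
  have h2 := hcb x
  have hn : 0 < ‖x‖ * ‖x‖ := mul_pos (norm_pos_iff.mpr hx0) (norm_pos_iff.mpr hx0)
  rw [Real.norm_eq_abs, Real.norm_of_nonneg hn.le] at h1
  have h3 := (abs_le.1 h1).2
  have h4 := mul_pos hc hn
  linarith
end
end

section
/- Let V: ℝ^n → ℝ be C² with V(0) = 0, ∇V(0) = 0 and P := (1/2)·H(V)(0), let a: ℝ^n → ℝ^n be differentiable at 0 with a(0) = 0 and A := Da(0), let b: ℝ^n → ℝ^{n×p} be continuous with B := b(0), and let R ∈ ℝ^{p×p} be symmetric positive definite. Define q(χ) := −∇V(χ)·a(χ) + (1/4)·(∇V(χ)ᵀb(χ)) R⁻¹ (∇V(χ)ᵀb(χ))ᵀ. Then q(χ) = χᵀQχ + o(|χ|²) as χ → 0, where Q := −(AᵀP + PA) + PBR⁻¹BᵀP; in particular if q is twice differentiable at 0 then (1/2)·H(q)(0) = Q. -/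
open Matrix Filter Topology Asymptotics

noncomputable section

theorem aux_clm {E F : Type*} [NormedAddCommGroup E] [NormedAddCommGroup F] [NormedSpace ℝ F]
    {l : Filter E} {c c0 : E → F →L[ℝ] ℝ} {w w0 : E → F} {g1 g2 : E → ℝ}
    (h1 : (fun x => c x - c0 x) =o[l] g1) (h2 : c0 =O[l] g1)
    (h3 : (fun x => w x - w0 x) =o[l] g2) (h4 : w =O[l] g2) :
    (fun x => c x (w x) - c0 x (w0 x)) =o[l] fun x => g1 x * g2 x := by
  have e1 : (fun x => (c x - c0 x) (w x)) =o[l] fun x => g1 x * g2 x := by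
    refine IsBigO.trans_isLittleO (g := fun x => ‖c x - c0 x‖ * ‖w x‖) ?_
      (h1.norm_left.mul_isBigO h4.norm_left)
    refine IsBigO.of_bound 1 (Eventually.of_forall fun x => ?_)
    simpa using (c x - c0 x).le_opNorm (w x)
  have e2 : (fun x => c0 x (w x - w0 x)) =o[l] fun x => g1 x * g2 x := by
    refine IsBigO.trans_isLittleO (g := fun x => ‖c0 x‖ * ‖w x - w0 x‖) ?_
      (h2.norm_left.mul_isLittleO h3.norm_left)
    refine IsBigO.of_bound 1 (Eventually.of_forall fun x => ?_)
    simpa using (c0 x).le_opNorm (w x - w0 x)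
  refine (e1.add e2).congr_left fun x => ?_
  simp

theorem aux_mul {E : Type*} {l : Filter E} {u u0 w w0 : E → ℝ} {g1 g2 : E → ℝ}
    (h1 : (fun x => u x - u0 x) =o[l] g1) (h2 : u0 =O[l] g1)
    (h3 : (fun x => w x - w0 x) =o[l] g2) (h4 : w =O[l] g2) :
    (fun x => u x * w x - u0 x * w0 x) =o[l] fun x => g1 x * g2 x := by
  refine ((h1.mul_isBigO h4).add (h2.mul_isLittleO h3)).congr_left fun x => ?_
  ring

theorem aux_taylor {E : Type*} [NormedAddCommGroup E] [NormedSpace ℝ E] {f : E → ℝ}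
    (hf : ContDiffAt ℝ 2 f 0) :
    (fun x => f x - f 0 - fderiv ℝ f 0 x - (1/2) * fderiv ℝ (fderiv ℝ f) 0 x x)
      =o[𝓝 0] fun x => ‖x‖ ^ 2 := by
  have hsymm : IsSymmSndFDerivAt ℝ f 0 := hf.isSymmSndFDerivAt (by simp)
  set L := fderiv ℝ (fderiv ℝ f) 0 with hL
  have hd : HasFDerivAt (fderiv ℝ f) L 0 :=
    ((hf.fderiv_right (m := 1) (by norm_num)).differentiableAt (by simp)).hasFDerivAt
  have hev : ∀ᶠ x in 𝓝 (0:E), DifferentiableAt ℝ f x :=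
    (hf.eventually (by simp)).mono fun x hx => hx.differentiableAt (by simp)
  obtain ⟨ε, hε, hball⟩ := Metric.eventually_nhds_iff_ball.1 hev
  have key := (convex_ball (0:E) ε).isLittleO_pow_succ (n := 1) (x₀ := 0)
    (f := fun x => f x - fderiv ℝ f 0 x - (1/2) * L x x)
    (f' := fun x => fderiv ℝ f x - fderiv ℝ f 0 - L x) (by simpa using hε) ?_ ?_
  · rw [Metric.isOpen_ball.nhdsWithin_eq (by simpa using hε)] at key
    refine (key.congr_left fun x => ?_).congr_right fun x => ?_
    · simp; ring
    · simp
  · intro x hx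
    refine HasFDerivAt.hasFDerivWithinAt ?_
    have hq : HasFDerivAt (fun x => L x x) (L x + L.flip x) x := by
      have := (L.hasFDerivAt (x := x)).clm_apply (hasFDerivAt_id x)
      refine this.congr_fderiv ?_
      ext v; simp
    refine (((hball x hx).hasFDerivAt.sub (fderiv ℝ f 0).hasFDerivAt).sub
      (hq.const_mul (1/2))).congr_fderiv ?_
    ext v
    have := hsymm x v
    simp only [← hL] at this
    simp [← this]; ring
  · rw [Metric.isOpen_ball.nhdsWithin_eq (by simpa using hε)]
    have := hd.isLittleO
    simpa using this.norm_right

theorem aux_homog {E : Type*} [NormedAddCommGroup E] [NormedSpace ℝ E] {h : E → ℝ}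
    (hh : ∀ (t : ℝ) x, h (t • x) = t ^ 2 * h x) (ho : h =o[𝓝 0] fun x => ‖x‖ ^ 2) (x : E) :
    h x = 0 := by
  have ht : Tendsto (fun t : ℝ => t • x) (𝓝[≠] 0) (𝓝 0) := by
    have : Continuous fun t : ℝ => t • x := by fun_prop
    have := this.tendsto 0
    simp only [zero_smul] at this
    exact this.mono_left nhdsWithin_le_nhds
  have h1 := ho.comp_tendsto ht
  have h2 : (fun t : ℝ => t ^ 2 * h x) =o[𝓝[≠] 0] fun t : ℝ => t ^ 2 * ‖x‖ ^ 2 := by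
    refine (h1.congr_left fun t => hh t x).congr_right fun t => ?_
    simp [norm_smul, mul_pow]
  have h3 : (fun t : ℝ => h x) =o[𝓝[≠] (0:ℝ)] fun t : ℝ => ‖x‖ ^ 2 := by
    have h4 := (isBigO_refl (fun t : ℝ => (t ^ 2)⁻¹) (𝓝[≠] 0)).mul_isLittleO h2
    refine h4.congr' ?_ ?_ <;>
    · filter_upwards [self_mem_nhdsWithin] with t ht
      have : t ≠ 0 := ht
      field_simp
  have h5 : (fun t : ℝ => h x) =o[𝓝[≠] (0:ℝ)] fun t : ℝ => (1:ℝ) :=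
    h3.trans_isBigO (isBigO_const_const _ one_ne_zero _)
  rw [isLittleO_one_iff] at h5
  exact tendsto_nhds_unique tendsto_const_nhds h5

theorem aux_hess_s11 {n : ℕ} (f : (Fin n → ℝ) → ℝ) (v w : Fin n → ℝ) :
    fderiv ℝ (fderiv ℝ f) 0 v w = v ⬝ᵥ (hessianAt f 0).mulVec w := by
  set L := fderiv ℝ (fderiv ℝ f) 0 with hL
  have hH : ∀ i j, hessianAt f 0 i j = L (Pi.single i 1) (Pi.single j 1) := by
    intro i j
    simp [hessianAt, iteratedFDeriv_two_apply, hL]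
  have e : ∀ u : Fin n → ℝ, u = ∑ i, u i • (Pi.single i (1:ℝ) : Fin n → ℝ) := fun u =>
    pi_eq_sum_univ' u
  conv_lhs => rw [e v, e w]
  simp only [map_sum, map_smul, ContinuousLinearMap.sum_apply, ContinuousLinearMap.smul_apply,
    dotProduct, mulVec, hH, smul_eq_mul, Finset.mul_sum]
  rw [Finset.sum_comm]
  refine Finset.sum_congr rfl fun i _ => Finset.sum_congr rfl fun j _ => ?_
  ring

theorem aux_hess_symm {n : ℕ} {f : (Fin n → ℝ) → ℝ} (hf : ContDiffAt ℝ 2 f 0) :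
    (hessianAt f 0)ᵀ = hessianAt f 0 := by
  have hsymm : IsSymmSndFDerivAt ℝ f 0 := hf.isSymmSndFDerivAt (by simp)
  ext i j
  simp [hessianAt, iteratedFDeriv_two_apply]
  exact hsymm _ _

theorem aux_polar {n : ℕ} {M : Matrix (Fin n) (Fin n) ℝ} (hM : Mᵀ = M)
    (h : ∀ x, x ⬝ᵥ M.mulVec x = 0) : M = 0 := by
  ext i j
  have h1 := h (Pi.single i 1 + Pi.single j 1)
  have h2 := h (Pi.single i 1)
  have h3 := h (Pi.single j 1)
  have h4 : M j i = M i j := congrFun (congrFun hM i) j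
  simp [mulVec_add, add_dotProduct, dotProduct_add] at h1 h2 h3
  simp
  linarith

/-- Quadratic approximation at the origin of the inverse-optimality
state cost `q := −L_aV + ¼ L_bV R⁻¹ (L_bV)ᵀ`: with `P := ½ H(V)(0)` and
`Q := −(AᵀP + PA) + PBR⁻¹BᵀP`, one has `q(χ) = χᵀQχ + o(‖χ‖²)`; in particular, if `q`
is twice differentiable at `0`, then `½ H(q)(0) = Q`. -/
theorem stmt11 {n p : ℕ}
    (V : (Fin n → ℝ) → ℝ)
    (hV : ContDiff ℝ 2 V) (hV0 : V 0 = 0) (hgrad0 : fderiv ℝ V 0 = 0)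
    (a : (Fin n → ℝ) → (Fin n → ℝ)) (b : (Fin n → ℝ) → Fin n → Fin p → ℝ)
    (A : Matrix (Fin n) (Fin n) ℝ) (B : Matrix (Fin n) (Fin p) ℝ)
    (R : Matrix (Fin p) (Fin p) ℝ)
    (ha_diff : DifferentiableAt ℝ a 0) (ha0 : a 0 = 0)
    (hA : ∀ v, fderiv ℝ a 0 v = A.mulVec v)
    (hb : Continuous b) (hB : B = Matrix.of (b 0))
    (hR : R.PosDef)
    (q : (Fin n → ℝ) → ℝ)
    (hq : q = fun χ => -(fderiv ℝ V χ (a χ))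
      + (1/4) * ((fun i => fderiv ℝ V χ (fun k => b χ k i)) ⬝ᵥ
          R⁻¹.mulVec (fun i => fderiv ℝ V χ (fun k => b χ k i))))
    (Q : Matrix (Fin n) (Fin n) ℝ)
    (hQ : Q = -(Aᵀ * (((1:ℝ)/2) • hessianAt V 0) + (((1:ℝ)/2) • hessianAt V 0) * A)
        + (((1:ℝ)/2) • hessianAt V 0) * B * R⁻¹ * Bᵀ * (((1:ℝ)/2) • hessianAt V 0)) :
    (fun χ => q χ - χ ⬝ᵥ Q.mulVec χ) =o[nhds (0 : Fin n → ℝ)] (fun χ => ‖χ‖ ^ 2) ∧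
    (ContDiffAt ℝ 2 q 0 → ((1:ℝ)/2) • hessianAt q 0 = Q) := by
  have hs : (hessianAt V 0)ᵀ = hessianAt V 0 := aux_hess_symm hV.contDiffAt
  have hLV := aux_hess_s11 V
  set H := hessianAt V 0 with hH
  set L := fderiv ℝ (fderiv ℝ V) 0 with hL
  have hRs : (R⁻¹)ᵀ = R⁻¹ := by
    have : Rᵀ = R := by simpa [IsHermitian] using hR.isHermitian
    rw [transpose_nonsing_inv, this]
  have hquad : ∀ χ, χ ⬝ᵥ Q.mulVec χ = -(L χ (A.mulVec χ)) + (1/4) *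
      ((fun i => L χ (fun k => b 0 k i)) ⬝ᵥ R⁻¹.mulVec (fun i => L χ (fun k => b 0 k i))) := by
    intro χ
    have hy : (fun i => L χ (fun k => b 0 k i)) = χ ᵥ* (H * B) := by
      ext i
      rw [hLV, ← vecMul_vecMul, dotProduct_mulVec, hB]
      rfl
    have hy' : χ ᵥ* (H * B) = (Bᵀ * H) *ᵥ χ := by
      rw [← mulVec_transpose, transpose_mul, hs]
    have t1 : χ ⬝ᵥ (Aᵀ * H) *ᵥ χ = χ ⬝ᵥ (H * A) *ᵥ χ := by
      rw [dotProduct_mulVec, ← mulVec_transpose, transpose_mul, hs, transpose_transpose,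
        dotProduct_comm]
    have t2 : χ ⬝ᵥ (H * B * R⁻¹ * Bᵀ * H) *ᵥ χ =
        (χ ᵥ* (H * B)) ⬝ᵥ R⁻¹ *ᵥ ((Bᵀ * H) *ᵥ χ) := by
      rw [← dotProduct_mulVec, mulVec_mulVec, mulVec_mulVec]
      simp only [Matrix.mul_assoc]
    rw [hy, hLV, mulVec_mulVec]
    nth_rewrite 2 [hy']
    rw [← t2, hQ]
    simp only [Matrix.mul_smul, Matrix.smul_mul, add_mulVec, neg_mulVec, smul_mulVec,
      dotProduct_add, dotProduct_neg, dotProduct_smul, t1, smul_eq_mul]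
    ring
  have hd : HasFDerivAt (fderiv ℝ V) L 0 :=
    ((hV.fderiv_right (m := 1) (by norm_num)).differentiable (by simp) 0).hasFDerivAt
  have d1 : (fun χ => fderiv ℝ V χ - L χ) =o[𝓝 0] fun χ : Fin n → ℝ => ‖χ‖ := by
    simpa [hgrad0] using hd.isLittleO.norm_right
  have d2 : (fun χ => L χ) =O[𝓝 0] fun χ : Fin n → ℝ => ‖χ‖ :=
    (L.isBigO_id _).norm_right
  have a1 : (fun χ => a χ - A.mulVec χ) =o[𝓝 0] fun χ : Fin n → ℝ => ‖χ‖ := by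
    simpa [ha0, hA] using ha_diff.hasFDerivAt.isLittleO.norm_right
  have a2 : a =O[𝓝 0] fun χ : Fin n → ℝ => ‖χ‖ := by
    simpa [ha0] using ha_diff.hasFDerivAt.isBigO_sub.norm_right
  have b1 : ∀ i, (fun χ => (fun k => b χ k i) - (fun k => b 0 k i))
      =o[𝓝 0] fun _ : Fin n → ℝ => (1:ℝ) := by
    intro i
    rw [isLittleO_one_iff]
    have : Continuous fun χ => (fun k => b χ k i) - (fun k => b 0 k i) := by fun_prop
    simpa using this.tendsto 0
  have b2 : ∀ i, (fun χ => (fun k => b χ k i)) =O[𝓝 0] fun _ : Fin n → ℝ => (1:ℝ) := by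
    intro i
    have : Continuous fun χ => (fun k => b χ k i) := by fun_prop
    exact (this.tendsto 0).isBigO_one ℝ
  have y1 : ∀ i, (fun χ => fderiv ℝ V χ (fun k => b χ k i) - L χ (fun k => b 0 k i))
      =o[𝓝 0] fun χ : Fin n → ℝ => ‖χ‖ := by
    intro i
    simpa using aux_clm d1 d2 (b1 i) (b2 i)
  have y2 : ∀ i, (fun χ => L χ (fun k => b 0 k i)) =O[𝓝 0] fun χ : Fin n → ℝ => ‖χ‖ := by
    intro i
    exact ((L.flip (fun k => b 0 k i)).isBigO_id _).norm_right
  have y3 : ∀ i, (fun χ => fderiv ℝ V χ (fun k => b χ k i)) =O[𝓝 0]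
      fun χ : Fin n → ℝ => ‖χ‖ := by
    intro i
    refine ((y1 i).isBigO.add (y2 i)).congr_left fun χ => ?_
    ring
  have T1 := aux_clm d1 d2 a1 a2
  have T2 : (fun χ => ∑ i, ∑ j, R⁻¹ i j *
      (fderiv ℝ V χ (fun k => b χ k i) * fderiv ℝ V χ (fun k => b χ k j)
        - L χ (fun k => b 0 k i) * L χ (fun k => b 0 k j))) =o[𝓝 0]
      fun χ : Fin n → ℝ => ‖χ‖ * ‖χ‖ := by
    refine IsLittleO.fun_sum fun i _ => IsLittleO.fun_sum fun j _ => ?_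
    exact (aux_mul (y1 i) (y2 i) (y1 j) (y3 j)).const_mul_left _
  have main : (fun χ => q χ - χ ⬝ᵥ Q.mulVec χ) =o[nhds (0 : Fin n → ℝ)]
      (fun χ => ‖χ‖ ^ 2) := by
    refine ((T1.neg_left.add (T2.const_mul_left (1/4))).congr_left fun χ => ?_).congr_right
      fun χ => (sq _).symm
    rw [hquad, hq]
    have hsum : ∀ y : Fin p → ℝ, y ⬝ᵥ R⁻¹ *ᵥ y = ∑ i, ∑ j, R⁻¹ i j * (y i * y j) := by
      intro y
      simp only [dotProduct, mulVec, Finset.mul_sum]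
      refine Finset.sum_congr rfl fun i _ => Finset.sum_congr rfl fun j _ => ?_
      ring
    simp only [hsum, mul_sub, Finset.sum_sub_distrib]
    ring
  refine ⟨main, fun hqc => ?_⟩
  have hQs : Qᵀ = Q := by
    rw [hQ]
    simp only [transpose_add, transpose_neg, transpose_mul, transpose_smul, hs, hRs,
      transpose_transpose, Matrix.mul_assoc]
    rw [add_comm (_ * A)]
  have hq0 : q 0 = 0 := by
    rw [hq]; simp [hgrad0, dotProduct]
  have hQO : (fun χ : Fin n → ℝ => χ ⬝ᵥ Q.mulVec χ) =O[𝓝 0] fun χ => ‖χ‖ ^ 2 := by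
    have h1 : (fun χ : Fin n → ℝ => ∑ i, χ i * (Q.mulVec χ) i) =O[𝓝 0]
        fun χ => ‖χ‖ * ‖χ‖ := by
      refine IsBigO.fun_sum fun i _ => IsBigO.mul ?_ ?_
      · exact ((ContinuousLinearMap.proj (R := ℝ) (φ := fun _ : Fin n => ℝ) i).isBigO_id _).norm_right
      · exact (((ContinuousLinearMap.proj (R := ℝ) (φ := fun _ : Fin n => ℝ) i).comp
          (LinearMap.toContinuousLinearMap Q.mulVecLin)).isBigO_id _).norm_right
    exact h1.congr_right fun χ => (sq _).symm
  have hqO : q =O[𝓝 0] fun χ : Fin n → ℝ => ‖χ‖ ^ 2 := by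
    refine (main.isBigO.add hQO).congr_left fun χ => ?_
    ring
  have hq1 : fderiv ℝ q 0 = 0 := by
    refine HasFDerivAt.fderiv (HasFDerivAt.of_isLittleO ?_)
    have : (fun χ : Fin n → ℝ => ‖χ‖ ^ 2) =o[𝓝 0] fun χ => χ :=
      isLittleO_norm_pow_id one_lt_two
    simpa [hq0] using hqO.trans_isLittleO this
  have hT := aux_taylor hqc
  have hdiff := main.sub hT
  have hdiff' : (fun χ => χ ⬝ᵥ (((1:ℝ)/2) • hessianAt q 0 - Q).mulVec χ) =o[𝓝 0]
      fun χ : Fin n → ℝ => ‖χ‖ ^ 2 := by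
    refine hdiff.congr_left fun χ => ?_
    simp only [hq0, hq1, aux_hess_s11, sub_mulVec, smul_mulVec, dotProduct_sub, dotProduct_smul,
      smul_eq_mul, ContinuousLinearMap.zero_apply]
    ring
  have hzero := aux_homog (fun t x => by
    simp only [mulVec_smul, dotProduct_smul, smul_dotProduct, smul_eq_mul]; ring) hdiff'
  refine sub_eq_zero.1 (aux_polar ?_ hzero)
  rw [transpose_sub, transpose_smul, aux_hess_symm hqc, hQs]
end
end
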